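/- arXiv:2506.17143 — 3 statements merged into one kernel-verified Lean document; each statement's English description precedes it below -/
import Mathlib

section
/- Let A be a unital C*-algebra, D ∈ A self-adjoint, a ∈ A, and t ≥ 1. Define c(x) := √(1/2 − x·(1+x²)^{−1/2}/2) and s(x) := √(1/2 + x·(1+x²)^{−1/2}/2), and set c_t := cfc(fun x => c(x/t)) D and s_t := cfc(fun x => s(x/t)) D via the continuous functional calculus. Then ‖c_t·a − a·c_t‖ ≤ (1/2)·t⁻¹·‖D·a − a·D‖ and ‖s_t·a − a·s_t‖ ≤ (1/2)·t⁻¹·‖D·a − a·D‖. -/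
/-!
Write `u = (1 + ix) / (1 - ix) = exp (2i arctan x)` for the Cayley transform of `x`. By half-angle
formulas, `c` and `s` are real parts of unimodular multiples of `u ^ (1/4)`, so it suffices to bound
`[u ^ p, a]` for `0 < p < 1`. Up to a positive constant, `u ^ p` is the Mellin-type integral
`∫ l ^ (p - 1) * (u / (u + l)) dl` over `(0, ∞)`: both solve `f' = 2ip / (1 + x²) f`. Each
`u / (u + l)` is a Möbius function of `x`, so its commutator with `a` is `2il R [D, a] R` with
`‖R‖ ≤ (1 + l)⁻¹`. Integrating these bounds and comparing with the normalising constant by an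
integration by parts in `l` yields `‖[u ^ p, a]‖ ≤ 2p ‖[D, a]‖`.
-/

open Complex MeasureTheory Set Filter Topology
open scoped Real

section CayleyPower

/-- `(1 - ix)(u + l)`, where `u = (1 + ix) / (1 - ix)` is the Cayley transform of `x`; clearing the
denominator of `u` makes it affine in both variables. -/
noncomputable def cayleyDenom (l x : ℝ) : ℂ := (1 + I * x) + l * (1 - I * x)

/-- `u / (u + l)` as a Möbius function of `x`, where `u = (1 + ix) / (1 - ix)` is the Cayley
transform of `x`. -/
noncomputable def cayleyKernel (l x : ℝ) : ℂ := (1 + I * x) / cayleyDenom l x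

/-- The power `u ^ p` of the Cayley transform `u = (1 + ix) / (1 - ix) = exp (2i arctan x)`, on the
branch that is continuous in `x` and equal to `1` at `x = 0`. -/
noncomputable def cayleyPow (p x : ℝ) : ℂ := exp ((2 * p * Real.arctan x : ℝ) * I)

/-- The integral `∫ l ^ (p - 1) * (u / (u + l)) dl` over `(0, ∞)`, with `u` the Cayley transform of
`x`, which represents `u ^ p` up to a constant factor when `0 < p < 1`. -/
noncomputable def cayleyMellin (p x : ℝ) : ℂ :=
  ∫ l in Ioi (0 : ℝ), ((l ^ (p - 1) : ℝ) : ℂ) * cayleyKernel l x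

variable {p l : ℝ}

lemma one_add_le_norm_cayleyDenom (l x : ℝ) : 1 + l ≤ ‖cayleyDenom l x‖ := calc
  1 + l = (cayleyDenom l x).re := by simp [cayleyDenom]
  _ ≤ ‖cayleyDenom l x‖ := re_le_norm _

lemma cayleyDenom_ne_zero (hl : 0 ≤ l) (x : ℝ) : cayleyDenom l x ≠ 0 :=
  norm_pos_iff.mp (by linarith [one_add_le_norm_cayleyDenom l x])

lemma norm_inv_cayleyDenom_le (hl : 0 ≤ l) (x : ℝ) : ‖(cayleyDenom l x)⁻¹‖ ≤ (1 + l)⁻¹ := by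
  rw [norm_inv]
  exact inv_anti₀ (by positivity) (one_add_le_norm_cayleyDenom l x)

lemma continuous_cayleyDenom : Continuous (fun q : ℝ × ℝ => cayleyDenom q.1 q.2) := by
  unfold cayleyDenom
  fun_prop

lemma hasDerivAt_inv_cayleyDenom_left (hl : 0 ≤ l) (x : ℝ) :
    HasDerivAt (fun l => (cayleyDenom l x)⁻¹) (-(1 - I * x) * (cayleyDenom l x)⁻¹ ^ 2) l := by
  have hdenom : HasDerivAt (fun l => cayleyDenom l x) (1 - I * x) l := by
    simpa [cayleyDenom] using
      (ofRealCLM.hasDerivAt (x := l)).mul_const (1 - I * x) |>.const_add (1 + I * x)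
  exact (hdenom.fun_inv (cayleyDenom_ne_zero hl x)).congr_deriv (by rw [inv_pow, div_eq_mul_inv])

lemma hasDerivAt_cayleyKernel (hl : 0 ≤ l) (x : ℝ) :
    HasDerivAt (cayleyKernel l) (2 * I * l * (cayleyDenom l x)⁻¹ ^ 2) x := by
  have hnum : HasDerivAt (fun x : ℝ => 1 + I * x) I x := by
    simpa using ((ofRealCLM.hasDerivAt (x := x)).const_mul I).const_add 1
  have hdenom : HasDerivAt (cayleyDenom l) (I - l * I) x := by
    have hconj : HasDerivAt (fun x : ℝ => 1 - I * x) (-I) x := by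
      simpa using ((ofRealCLM.hasDerivAt (x := x)).const_mul I).const_sub 1
    exact (hnum.add (hconj.const_mul (l : ℂ))).congr_deriv (by ring)
  refine (hnum.fun_div hdenom (cayleyDenom_ne_zero hl x)).congr_deriv ?_
  rw [inv_pow, div_eq_mul_inv]
  congr 1
  rw [cayleyDenom]
  ring

lemma continuous_cayleyKernel (hl : 0 ≤ l) : Continuous (cayleyKernel l) :=
  continuous_iff_continuousAt.mpr fun x => (hasDerivAt_cayleyKernel hl x).continuousAt

lemma rpow_sub_one_mul_self (hl : l ≠ 0) (p : ℝ) : l ^ (p - 1) * l = l ^ p := by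
  rw [Real.rpow_sub_one hl, div_mul_cancel₀ _ hl]

lemma integrableOn_rpow_sub_one_mul_inv_one_add (hp : p ∈ Ioo 0 1) :
    IntegrableOn (fun l : ℝ => l ^ (p - 1) * (1 + l)⁻¹) (Ioi 0) :=
  (Real.integrableOn_rpowIntegrand₀₁_Ioi hp zero_le_one).congr_fun
    (fun l hl => by
      simp only [Real.rpowIntegrand₀₁_eq_pow_div hp hl.le zero_le_one, mul_one, div_eq_mul_inv,
        add_comm l]) measurableSet_Ioi

lemma integral_rpow_sub_one_mul_inv_one_add_pos (hp : p ∈ Ioo 0 1) :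
    0 < ∫ l in Ioi (0 : ℝ), l ^ (p - 1) * (1 + l)⁻¹ := by
  refine (Real.integral_rpowIntegrand₀₁_one_pos hp).trans_eq
    (setIntegral_congr_fun measurableSet_Ioi fun l hl => ?_)
  simp only [Real.rpowIntegrand₀₁_eq_pow_div hp hl.le zero_le_one, mul_one, div_eq_mul_inv,
    add_comm l]

lemma integrableOn_rpow_mul_inv_one_add_sq (hp : p ∈ Ioo 0 1) :
    IntegrableOn (fun l : ℝ => l ^ p * (1 + l)⁻¹ ^ 2) (Ioi 0) := by
  refine (integrableOn_rpow_sub_one_mul_inv_one_add hp).mono' ?_ ?_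
  · exact (by fun_prop : Measurable fun l : ℝ => l ^ p * (1 + l)⁻¹ ^ 2).aestronglyMeasurable
  · filter_upwards [ae_restrict_mem measurableSet_Ioi] with l (hl : 0 < l)
    rw [Real.norm_of_nonneg (by positivity)]
    calc l ^ p * (1 + l)⁻¹ ^ 2 = l ^ (p - 1) * (1 + l)⁻¹ * (l / (1 + l)) := by
          rw [← rpow_sub_one_mul_self hl.ne' p]
          ring
      _ ≤ l ^ (p - 1) * (1 + l)⁻¹ :=
          mul_le_of_le_one_right (by positivity) ((div_le_one (by positivity)).mpr (by linarith))

lemma norm_rpow_mul_inv_cayleyDenom_pow_le (hl : 0 ≤ l) (q : ℝ) (n : ℕ) (x : ℝ) :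
    ‖((l ^ q : ℝ) : ℂ) * (cayleyDenom l x)⁻¹ ^ n‖ ≤ l ^ q * (1 + l)⁻¹ ^ n := by
  rw [norm_mul, norm_pow, norm_real, Real.norm_of_nonneg (by positivity)]
  gcongr
  exact norm_inv_cayleyDenom_le hl x

lemma integrableOn_rpow_mul_inv_cayleyDenom_pow {q : ℝ} {n : ℕ}
    (h : IntegrableOn (fun l : ℝ => l ^ q * (1 + l)⁻¹ ^ n) (Ioi 0)) (x : ℝ) :
    IntegrableOn (fun l : ℝ => ((l ^ q : ℝ) : ℂ) * (cayleyDenom l x)⁻¹ ^ n) (Ioi 0) := by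
  refine h.mono' ?_ ?_
  · unfold cayleyDenom
    exact (by fun_prop : Measurable _).aestronglyMeasurable
  · filter_upwards [ae_restrict_mem measurableSet_Ioi] with l hl
    exact norm_rpow_mul_inv_cayleyDenom_pow_le hl.le q n x

lemma integrableOn_rpow_sub_one_mul_inv_cayleyDenom (hp : p ∈ Ioo 0 1) (x : ℝ) :
    IntegrableOn (fun l : ℝ => ((l ^ (p - 1) : ℝ) : ℂ) * (cayleyDenom l x)⁻¹) (Ioi 0) := by
  simpa only [pow_one] using integrableOn_rpow_mul_inv_cayleyDenom_pow (n := 1)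
    (by simpa only [pow_one] using integrableOn_rpow_sub_one_mul_inv_one_add hp) x

lemma tendsto_rpow_mul_inv_cayleyDenom_atTop (hp : p < 1) (x : ℝ) :
    Tendsto (fun l : ℝ => ((l ^ p : ℝ) : ℂ) * (cayleyDenom l x)⁻¹) atTop (𝓝 0) := by
  refine squeeze_zero_norm' ?_ (tendsto_rpow_neg_atTop (sub_pos.mpr hp))
  filter_upwards [eventually_gt_atTop 0] with l hl
  calc ‖((l ^ p : ℝ) : ℂ) * (cayleyDenom l x)⁻¹‖ ≤ l ^ p * (1 + l)⁻¹ := by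
        simpa only [pow_one] using norm_rpow_mul_inv_cayleyDenom_pow_le hl.le p 1 x
    _ ≤ l ^ p * l⁻¹ := by gcongr; linarith
    _ = l ^ (-(1 - p)) := by rw [neg_sub, Real.rpow_sub_one hl.ne', div_eq_mul_inv]

lemma mul_integral_rpow_sub_one_mul_inv_cayleyDenom (hp : p ∈ Ioo 0 1) (x : ℝ) :
    p * ∫ l in Ioi (0 : ℝ), ((l ^ (p - 1) : ℝ) : ℂ) * (cayleyDenom l x)⁻¹ =
      (1 - I * x) * ∫ l in Ioi (0 : ℝ), ((l ^ p : ℝ) : ℂ) * (cayleyDenom l x)⁻¹ ^ 2 := by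
  have hderiv : ∀ l ∈ Ioi (0 : ℝ), HasDerivAt (fun l : ℝ => ((l ^ p : ℝ) : ℂ) * (cayleyDenom l x)⁻¹)
      (p * (((l ^ (p - 1) : ℝ) : ℂ) * (cayleyDenom l x)⁻¹) -
        (1 - I * x) * (((l ^ p : ℝ) : ℂ) * (cayleyDenom l x)⁻¹ ^ 2)) l := fun l hl =>
    ((Real.hasDerivAt_rpow_const (.inl hl.ne')).ofReal_comp.mul
      (hasDerivAt_inv_cayleyDenom_left hl.le x)).congr_deriv (by push_cast; ring)
  have hcont : ContinuousWithinAt (fun l : ℝ => ((l ^ p : ℝ) : ℂ) * (cayleyDenom l x)⁻¹)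
      (Ici 0) 0 :=
    (continuous_ofReal.comp (Real.continuous_rpow_const hp.1.le)).continuousWithinAt.mul
      (hasDerivAt_inv_cayleyDenom_left le_rfl x).continuousAt.continuousWithinAt
  have hint := (integrableOn_rpow_sub_one_mul_inv_cayleyDenom hp x).const_mul (p : ℂ)
  have hint_sq := (integrableOn_rpow_mul_inv_cayleyDenom_pow
    (integrableOn_rpow_mul_inv_one_add_sq hp) x).const_mul (1 - I * x)
  have hparts := integral_Ioi_of_hasDerivAt_of_tendsto hcont hderiv (hint.sub hint_sq)
    (tendsto_rpow_mul_inv_cayleyDenom_atTop hp.2 x)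
  rw [integral_sub hint hint_sq, integral_const_mul, integral_const_mul] at hparts
  simpa [Real.zero_rpow hp.1.ne', sub_eq_zero] using hparts

lemma integral_rpow_mul_inv_one_add_sq (hp : p ∈ Ioo 0 1) :
    ∫ l in Ioi (0 : ℝ), l ^ p * (1 + l)⁻¹ ^ 2 =
      p * ∫ l in Ioi (0 : ℝ), l ^ (p - 1) * (1 + l)⁻¹ := by
  have h := mul_integral_rpow_sub_one_mul_inv_cayleyDenom hp 0
  have hdenom (l : ℝ) : cayleyDenom l 0 = ((1 + l : ℝ) : ℂ) := by simp [cayleyDenom]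
  simp only [hdenom, ← ofReal_inv, ← ofReal_pow, ← ofReal_mul, integral_complex_ofReal, ofReal_zero,
    mul_zero, sub_zero, one_mul] at h
  exact_mod_cast h.symm

lemma cayleyMellin_eq_mul_integral (p x : ℝ) :
    cayleyMellin p x =
      (1 + I * x) * ∫ l in Ioi (0 : ℝ), ((l ^ (p - 1) : ℝ) : ℂ) * (cayleyDenom l x)⁻¹ := by
  rw [cayleyMellin, ← integral_const_mul]
  congr 1 with l
  rw [cayleyKernel]
  ring

lemma cayleyMellin_zero (p : ℝ) :
    cayleyMellin p 0 = (∫ l in Ioi (0 : ℝ), l ^ (p - 1) * (1 + l)⁻¹ : ℝ) := by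
  have hkernel (l : ℝ) : cayleyKernel l 0 = ((1 + l)⁻¹ : ℝ) := by
    simp [cayleyKernel, cayleyDenom]
  simp only [cayleyMellin, hkernel, ← ofReal_mul, integral_complex_ofReal]

lemma integrableOn_rpow_sub_one_mul_cayleyKernel (hp : p ∈ Ioo 0 1) (x : ℝ) :
    IntegrableOn (fun l : ℝ => ((l ^ (p - 1) : ℝ) : ℂ) * cayleyKernel l x) (Ioi 0) := by
  refine ((integrableOn_rpow_sub_one_mul_inv_cayleyDenom hp x).const_mul (1 + I * x)).congr ?_
  filter_upwards with l
  rw [cayleyKernel]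
  ring

lemma hasDerivAt_cayleyMellin (hp : p ∈ Ioo 0 1) (x : ℝ) :
    HasDerivAt (cayleyMellin p)
      (2 * I * ∫ l in Ioi (0 : ℝ), ((l ^ p : ℝ) : ℂ) * (cayleyDenom l x)⁻¹ ^ 2) x := by
  have hint_sq := integrableOn_rpow_mul_inv_one_add_sq hp
  rw [← integral_const_mul]
  refine (hasDerivAt_integral_of_dominated_loc_of_deriv_le (s := univ)
    (F' := fun x (l : ℝ) => 2 * I * (((l ^ p : ℝ) : ℂ) * (cayleyDenom l x)⁻¹ ^ 2))
    (bound := fun l => 2 * (l ^ p * (1 + l)⁻¹ ^ 2)) univ_mem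
    (.of_forall fun x => (integrableOn_rpow_sub_one_mul_cayleyKernel hp x).aestronglyMeasurable)
    (integrableOn_rpow_sub_one_mul_cayleyKernel hp x)
    ((integrableOn_rpow_mul_inv_cayleyDenom_pow hint_sq x).const_mul _).aestronglyMeasurable
    ?_ (hint_sq.const_mul 2) ?_).2
  · filter_upwards [ae_restrict_mem measurableSet_Ioi] with l hl x _
    rw [norm_mul, show ‖2 * I‖ = 2 by simp]
    gcongr
    exact norm_rpow_mul_inv_cayleyDenom_pow_le hl.le p 2 x
  · filter_upwards [ae_restrict_mem measurableSet_Ioi] with l hl x _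
    refine ((hasDerivAt_cayleyKernel hl.le x).const_mul _).congr_deriv ?_
    rw [← rpow_sub_one_mul_self hl.ne' p]
    push_cast
    ring

lemma hasDerivAt_cayleyMellin_eq_mul_self (hp : p ∈ Ioo 0 1) (x : ℝ) :
    HasDerivAt (cayleyMellin p)
      ((2 * p * (1 / (1 + x ^ 2)) : ℝ) * I * cayleyMellin p x) x := by
  refine (hasDerivAt_cayleyMellin hp x).congr_deriv ?_
  have hfactor : (1 : ℂ) + x ^ 2 = (1 - I * x) * (1 + I * x) := by ring_nf; simp
  have hne : (1 : ℂ) + x ^ 2 ≠ 0 := by exact_mod_cast (by positivity : 1 + x ^ 2 ≠ 0)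
  have hparts := mul_integral_rpow_sub_one_mul_inv_cayleyDenom hp x
  rw [cayleyMellin_eq_mul_integral]
  generalize ∫ l in Ioi (0 : ℝ), ((l ^ (p - 1) : ℝ) : ℂ) * (cayleyDenom l x)⁻¹ = J at *
  generalize ∫ l in Ioi (0 : ℝ), ((l ^ p : ℝ) : ℂ) * (cayleyDenom l x)⁻¹ ^ 2 = K at *
  push_cast
  field_simp
  linear_combination K * hfactor - (1 + I * x) * hparts

lemma hasDerivAt_cayleyPow (p x : ℝ) :
    HasDerivAt (cayleyPow p) ((2 * p * (1 / (1 + x ^ 2)) : ℝ) * I * cayleyPow p x) x :=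
  (((Real.hasDerivAt_arctan x).const_mul (2 * p)).ofReal_comp.mul_const I).cexp.congr_deriv
    (mul_comm _ _)

lemma cayleyPow_ne_zero (p x : ℝ) : cayleyPow p x ≠ 0 := exp_ne_zero _

lemma continuous_cayleyPow (p : ℝ) : Continuous (cayleyPow p) := by
  unfold cayleyPow
  fun_prop

lemma cayleyMellin_eq_mul_cayleyPow (hp : p ∈ Ioo 0 1) (x : ℝ) :
    cayleyMellin p x =
      (∫ l in Ioi (0 : ℝ), l ^ (p - 1) * (1 + l)⁻¹ : ℝ) * cayleyPow p x := by
  have hquot (y : ℝ) : HasDerivAt (fun y => cayleyMellin p y / cayleyPow p y) 0 y :=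
    ((hasDerivAt_cayleyMellin_eq_mul_self hp y).fun_div (hasDerivAt_cayleyPow p y)
      (cayleyPow_ne_zero p y)).congr_deriv (by ring)
  have hconst := is_const_of_deriv_eq_zero (fun y => (hquot y).differentiableAt)
    (fun y => (hquot y).deriv) x 0
  have hpow : cayleyPow p 0 = 1 := by simp [cayleyPow]
  rwa [div_eq_iff (cayleyPow_ne_zero p x), cayleyMellin_zero, hpow, div_one] at hconst

end CayleyPower

section Intertwiner

variable {A : Type*} [CStarAlgebra A] {D E a : A}

lemma cfc_const_add_const_mul (α β : ℂ) (D : A) [IsStarNormal D] :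
    cfc (fun z : ℂ => α + β * z) D = α • (1 : A) + β • D := by
  rw [cfc_const_add α (fun z => β * z) D, cfc_const_mul_id β D, Algebra.algebraMap_eq_smul_one]

lemma cfc_inv_mul_cancel {f : ℂ → ℂ} {D : A} [IsStarNormal D] (hf : ContinuousOn f (spectrum ℂ D))
    (hf₀ : ∀ z ∈ spectrum ℂ D, f z ≠ 0) : cfc (fun z => (f z)⁻¹) D * cfc f D = 1 := by
  rw [← cfc_mul (fun z => (f z)⁻¹) f D (hf.inv₀ hf₀) hf, ← cfc_const_one ℂ D]
  exact cfc_congr fun z hz => inv_mul_cancel₀ (hf₀ z hz)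

lemma cfc_moebius_mul_sub [IsStarNormal D] [IsStarNormal E] (α β γ δ : ℂ)
    (hD : ∀ z ∈ spectrum ℂ D, γ + δ * z ≠ 0) (hE : ∀ z ∈ spectrum ℂ E, γ + δ * z ≠ 0) :
    cfc (fun z : ℂ => (α + β * z) / (γ + δ * z)) D * a -
        a * cfc (fun z : ℂ => (α + β * z) / (γ + δ * z)) E =
      (β * γ - α * δ) • (cfc (fun z : ℂ => (γ + δ * z)⁻¹) D * (D * a - a * E) *
        cfc (fun z : ℂ => (γ + δ * z)⁻¹) E) := by
  have hcD : ContinuousOn (fun z : ℂ => (γ + δ * z)⁻¹) (spectrum ℂ D) :=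
    ContinuousOn.inv₀ (by fun_prop) hD
  have hcE : ContinuousOn (fun z : ℂ => (γ + δ * z)⁻¹) (spectrum ℂ E) :=
    ContinuousOn.inv₀ (by fun_prop) hE
  have hquotD : cfc (fun z : ℂ => (α + β * z) / (γ + δ * z)) D =
      cfc (fun z : ℂ => (γ + δ * z)⁻¹) D * (α • (1 : A) + β • D) := by
    simp only [div_eq_inv_mul]
    rw [cfc_mul _ _ D hcD (by fun_prop), cfc_const_add_const_mul]
  have hquotE : cfc (fun z : ℂ => (α + β * z) / (γ + δ * z)) E =
      (α • (1 : A) + β • E) * cfc (fun z : ℂ => (γ + δ * z)⁻¹) E := by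
    simp only [div_eq_mul_inv]
    rw [cfc_mul _ _ E (by fun_prop) hcE, cfc_const_add_const_mul]
  have hinvD : cfc (fun z : ℂ => (γ + δ * z)⁻¹) D * (γ • (1 : A) + δ • D) = 1 := by
    rw [← cfc_const_add_const_mul]
    exact cfc_inv_mul_cancel (by fun_prop) hD
  have hinvE : (γ • (1 : A) + δ • E) * cfc (fun z : ℂ => (γ + δ * z)⁻¹) E = 1 := by
    rw [← cfc_const_add_const_mul, cfc_commute_cfc _ _ E |>.eq]
    exact cfc_inv_mul_cancel (by fun_prop) hE
  rw [hquotD, hquotE]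
  set R := cfc (fun z : ℂ => (γ + δ * z)⁻¹) D
  set S := cfc (fun z : ℂ => (γ + δ * z)⁻¹) E
  calc R * (α • 1 + β • D) * a - a * ((α • 1 + β • E) * S)
      = R * (α • 1 + β • D) * a * ((γ • 1 + δ • E) * S) -
          R * (γ • 1 + δ • D) * a * ((α • 1 + β • E) * S) := by
        rw [hinvD, hinvE, mul_one, one_mul]
    _ = R * ((α • 1 + β • D) * a * (γ • 1 + δ • E) -
          (γ • 1 + δ • D) * a * (α • 1 + β • E)) * S := by noncomm_ring
    _ = R * ((β * γ - α * δ) • (D * a - a * E)) * S := by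
        congr 2
        simp only [add_mul, mul_add, smul_mul_assoc, mul_smul_comm, one_mul, mul_one, smul_add,
          smul_smul]
        module
    _ = (β * γ - α * δ) • (R * (D * a - a * E) * S) := by
        rw [mul_smul_comm, smul_mul_assoc]

open Function in
lemma norm_cfc_setIntegral_mul_sub_le {X : Type*} [MeasurableSpace X]
    [TopologicalSpace X] [OpensMeasurableSpace X] [SecondCountableTopology X] {μ : Measure X}
    {s : Set X} (hs : MeasurableSet s) [IsStarNormal D] [IsStarNormal E] {f : X → ℂ → ℂ}
    {boundD boundE bound : X → ℝ}
    (hfD : ContinuousOn (uncurry f) (s ×ˢ spectrum ℂ D))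
    (hfE : ContinuousOn (uncurry f) (s ×ˢ spectrum ℂ E))
    (hboundD : ∀ x ∈ s, ∀ z ∈ spectrum ℂ D, ‖f x z‖ ≤ boundD x)
    (hboundE : ∀ x ∈ s, ∀ z ∈ spectrum ℂ E, ‖f x z‖ ≤ boundE x)
    (hintD : IntegrableOn boundD s μ) (hintE : IntegrableOn boundE s μ)
    (hint : IntegrableOn bound s μ)
    (hbound : ∀ x ∈ s, ‖cfc (f x) D * a - a * cfc (f x) E‖ ≤ bound x) :
    ‖cfc (fun z => ∫ x in s, f x z ∂μ) D * a - a * cfc (fun z => ∫ x in s, f x z ∂μ) E‖ ≤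
      ∫ x in s, bound x ∂μ := by
  have hD := integrableOn_cfc hs f boundD D hfD (ae_restrict_of_forall_mem hs hboundD) hintD.2
  have hE := integrableOn_cfc hs f boundE E hfE (ae_restrict_of_forall_mem hs hboundE) hintE.2
  rw [cfc_setIntegral hs f boundD D hfD (ae_restrict_of_forall_mem hs hboundD) hintD.2,
    cfc_setIntegral hs f boundE E hfE (ae_restrict_of_forall_mem hs hboundE) hintE.2,
    ← integral_mul_const_of_integrable hD, ← integral_const_mul_of_integrable hE,
    ← integral_sub (hD.mul_const a) (hE.const_mul a)]
  exact norm_integral_le_of_norm_le hint (ae_restrict_of_forall_mem hs hbound)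

lemma norm_cfc_star_mul_sub (f : ℂ → ℂ) (D E a : A) :
    ‖cfc (fun z => star (f z)) D * a - a * cfc (fun z => star (f z)) E‖ =
      ‖cfc f E * star a - star a * cfc f D‖ := by
  rw [cfc_star, cfc_star, ← norm_star, norm_sub_rev]
  simp only [star_sub, star_mul, star_star]

lemma norm_cfc_re_mul_sub_le {f : ℝ → ℂ} (hf : Continuous f) (hD : IsSelfAdjoint D)
    (hE : IsSelfAdjoint E) {M : ℝ}
    (hDE : ‖cfc (fun z : ℂ => f z.re) D * a - a * cfc (fun z : ℂ => f z.re) E‖ ≤ M)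
    (hED : ‖cfc (fun z : ℂ => f z.re) E * star a - star a * cfc (fun z : ℂ => f z.re) D‖ ≤ M) :
    ‖cfc (fun x => (f x).re) D * a - a * cfc (fun x => (f x).re) E‖ ≤ M := by
  have hre {B : A} (hB : IsSelfAdjoint B) : cfc (fun x => (f x).re) B =
      (2⁻¹ : ℂ) • (cfc (fun z : ℂ => f z.re) B + cfc (fun z : ℂ => star (f z.re)) B) := by
    have := hB.isStarNormal
    rw [cfc_real_eq_complex _ hB, ← cfc_add .., ← cfc_smul ..]
    refine cfc_congr fun z _ => ?_
    simp only [re_eq_add_conj, smul_eq_mul, div_eq_inv_mul, star_def]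
  rw [← norm_cfc_star_mul_sub] at hED
  rw [hre hD, hre hE]
  set T := cfc (fun z : ℂ => f z.re) D
  set U := cfc (fun z : ℂ => f z.re) E
  set T' := cfc (fun z : ℂ => star (f z.re)) D
  set U' := cfc (fun z : ℂ => star (f z.re)) E
  calc ‖((2⁻¹ : ℂ) • (T + T')) * a - a * ((2⁻¹ : ℂ) • (U + U'))‖
      = ‖(2⁻¹ : ℂ) • ((T * a - a * U) + (T' * a - a * U'))‖ := by
        rw [smul_mul_assoc, mul_smul_comm, ← smul_sub]
        congr 2
        noncomm_ring
    _ = 2⁻¹ * ‖(T * a - a * U) + (T' * a - a * U')‖ := by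
        rw [norm_smul, norm_inv, Complex.norm_ofNat]
    _ ≤ 2⁻¹ * (M + M) := by
        gcongr
        exact norm_add_le_of_le hDE hED
    _ = M := by ring

lemma norm_cfc_const_mul_mul_sub (f : ℂ → ℂ) (w : ℂ) (hD : ContinuousOn f (spectrum ℂ D))
    (hE : ContinuousOn f (spectrum ℂ E)) :
    ‖cfc (fun z => w * f z) D * a - a * cfc (fun z => w * f z) E‖ =
      ‖w‖ * ‖cfc f D * a - a * cfc f E‖ := by
  rw [cfc_const_mul w f D hD, cfc_const_mul w f E hE, smul_mul_assoc, mul_smul_comm, ← smul_sub,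
    norm_smul]

lemma norm_cfc_div_mul_sub_le {f : ℝ → ℝ} (hf : Continuous f) {M : ℝ}
    (h : ∀ {D E : A}, IsSelfAdjoint D → IsSelfAdjoint E →
      ‖cfc f D * a - a * cfc f E‖ ≤ M * ‖D * a - a * E‖)
    (hD : IsSelfAdjoint D) (hE : IsSelfAdjoint E) {t : ℝ} (ht : 0 < t) :
    ‖cfc (fun x => f (x / t)) D * a - a * cfc (fun x => f (x / t)) E‖ ≤
      M * t⁻¹ * ‖D * a - a * E‖ := by
  have hscale {B : A} (hB : IsSelfAdjoint B) :
      cfc (fun x => f (x / t)) B = cfc f (t⁻¹ • B) := by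
    simp only [div_eq_inv_mul]
    exact cfc_comp_const_mul t⁻¹ f B hf.continuousOn hB
  have hselfAdjoint {B : A} (hB : IsSelfAdjoint B) : IsSelfAdjoint (t⁻¹ • B) :=
    (IsSelfAdjoint.all t⁻¹).smul hB
  rw [hscale hD, hscale hE]
  refine (h (hselfAdjoint hD) (hselfAdjoint hE)).trans_eq ?_
  rw [smul_mul_assoc, mul_smul_comm, ← smul_sub, norm_smul, Real.norm_of_nonneg (by positivity),
    mul_assoc]

end Intertwiner

section Estimates

variable {A : Type*} [CStarAlgebra A] {D E : A} {p l : ℝ}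

lemma norm_cfc_cayleyKernel_mul_sub_le (hD : IsSelfAdjoint D) (hE : IsSelfAdjoint E) (a : A)
    (hl : 0 ≤ l) :
    ‖cfc (fun z : ℂ => cayleyKernel l z.re) D * a - a * cfc (fun z : ℂ => cayleyKernel l z.re) E‖ ≤
      2 * l * (1 + l)⁻¹ ^ 2 * ‖D * a - a * E‖ := by
  have := hD.isStarNormal
  have := hE.isStarNormal
  have hdenom {B : A} (hB : IsSelfAdjoint B) {z : ℂ} (hz : z ∈ spectrum ℂ B) :
      (1 + l : ℂ) + I * (1 - l) * z = cayleyDenom l z.re := by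
    rw [cayleyDenom, ← hB.mem_spectrum_eq_re hz]
    ring
  have hkernel {B : A} (hB : IsSelfAdjoint B) : cfc (fun z : ℂ => cayleyKernel l z.re) B =
      cfc (fun z : ℂ => (1 + I * z) / ((1 + l : ℂ) + I * (1 - l) * z)) B :=
    cfc_congr fun z hz => by
      simp only [cayleyKernel, hdenom hB hz, ← hB.mem_spectrum_eq_re hz]
  have hne {B : A} (hB : IsSelfAdjoint B) :
      ∀ z ∈ spectrum ℂ B, (1 + l : ℂ) + I * (1 - l) * z ≠ 0 :=
    fun z hz => hdenom hB hz ▸ cayleyDenom_ne_zero hl _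
  have hinv {B : A} (hB : IsSelfAdjoint B) :
      ‖cfc (fun z : ℂ => ((1 + l : ℂ) + I * (1 - l) * z)⁻¹) B‖ ≤ (1 + l)⁻¹ :=
    norm_cfc_le (by positivity) fun z hz => by
      rw [hdenom hB hz]
      exact norm_inv_cayleyDenom_le hl _
  have hdet : ‖I * (1 + l : ℂ) - 1 * (I * (1 - l))‖ = 2 * l := by
    rw [show I * (1 + l : ℂ) - 1 * (I * (1 - l)) = I * (2 * l : ℝ) by push_cast; ring, norm_mul,
      norm_I, one_mul, norm_real, Real.norm_of_nonneg (by positivity)]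
  rw [hkernel hD, hkernel hE, cfc_moebius_mul_sub 1 I _ _ (hne hD) (hne hE), norm_smul, hdet]
  calc 2 * l * ‖_ * (D * a - a * E) * _‖
      ≤ 2 * l * ((1 + l)⁻¹ * ‖D * a - a * E‖ * (1 + l)⁻¹) := by
        gcongr
        exact norm_mul_le_of_le (norm_mul_le_of_le (hinv hD) le_rfl) (hinv hE)
    _ = 2 * l * (1 + l)⁻¹ ^ 2 * ‖D * a - a * E‖ := by ring

lemma norm_cfc_rpow_sub_one_mul_cayleyKernel_mul_sub_le (p : ℝ) (hD : IsSelfAdjoint D)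
    (hE : IsSelfAdjoint E) (a : A) (hl : 0 < l) :
    ‖cfc (fun z : ℂ => ((l ^ (p - 1) : ℝ) : ℂ) * cayleyKernel l z.re) D * a -
        a * cfc (fun z : ℂ => ((l ^ (p - 1) : ℝ) : ℂ) * cayleyKernel l z.re) E‖ ≤
      2 * (l ^ p * (1 + l)⁻¹ ^ 2) * ‖D * a - a * E‖ := by
  have hkernel : Continuous fun z : ℂ => cayleyKernel l z.re :=
    (continuous_cayleyKernel hl.le).comp continuous_re
  rw [norm_cfc_const_mul_mul_sub _ _ hkernel.continuousOn hkernel.continuousOn, norm_real,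
    Real.norm_of_nonneg (by positivity)]
  calc l ^ (p - 1) * ‖_‖ ≤ l ^ (p - 1) * (2 * l * (1 + l)⁻¹ ^ 2 * ‖D * a - a * E‖) := by
        gcongr
        exact norm_cfc_cayleyKernel_mul_sub_le hD hE a hl.le
    _ = 2 * (l ^ p * (1 + l)⁻¹ ^ 2) * ‖D * a - a * E‖ := by
        rw [← rpow_sub_one_mul_self hl.ne' p]
        ring

lemma norm_cayleyKernel_le_of_mem_spectrum (hD : IsSelfAdjoint D) (hl : 0 ≤ l) {z : ℂ}
    (hz : z ∈ spectrum ℂ D) :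
    ‖cayleyKernel l z.re‖ ≤ (1 + ‖D‖ * ‖(1 : A)‖) * (1 + l)⁻¹ := by
  rw [cayleyKernel, div_eq_mul_inv]
  refine norm_mul_le_of_le (norm_add_le_of_le norm_one.le ?_) (norm_inv_cayleyDenom_le hl _)
  rw [norm_mul, norm_I, one_mul, ← hD.mem_spectrum_eq_re hz]
  exact spectrum.norm_le_norm_mul_of_mem hz

lemma continuousOn_rpow_sub_one_mul_cayleyKernel (p : ℝ) :
    ContinuousOn (fun q : ℝ × ℂ => ((q.1 ^ (p - 1) : ℝ) : ℂ) * cayleyKernel q.1 q.2.re)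
      (Ioi 0 ×ˢ univ) := by
  refine ContinuousOn.mul ?_ (ContinuousOn.div (by fun_prop) ?_ fun q hq =>
    cayleyDenom_ne_zero (le_of_lt hq.1) _)
  · exact continuous_ofReal.comp_continuousOn
      (continuousOn_fst.rpow_const fun q hq => .inl (ne_of_gt hq.1))
  · exact (continuous_cayleyDenom.comp
      (continuous_fst.prodMk (continuous_re.comp continuous_snd))).continuousOn

lemma norm_cfc_cayleyMellin_mul_sub_le (hp : p ∈ Ioo 0 1) (hD : IsSelfAdjoint D)
    (hE : IsSelfAdjoint E) (a : A) :
    ‖cfc (fun z : ℂ => cayleyMellin p z.re) D * a - a * cfc (fun z : ℂ => cayleyMellin p z.re) E‖ ≤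
      2 * p * (∫ l in Ioi (0 : ℝ), l ^ (p - 1) * (1 + l)⁻¹) * ‖D * a - a * E‖ := by
  have := hD.isStarNormal
  have := hE.isStarNormal
  have hcont (B : A) := (continuousOn_rpow_sub_one_mul_cayleyKernel p).mono
    (prod_mono_right (s := Ioi 0) (subset_univ (spectrum ℂ B)))
  have hbound {B : A} (hB : IsSelfAdjoint B) : ∀ l ∈ Ioi (0 : ℝ), ∀ z ∈ spectrum ℂ B,
      ‖((l ^ (p - 1) : ℝ) : ℂ) * cayleyKernel l z.re‖ ≤
        (1 + ‖B‖ * ‖(1 : A)‖) * (l ^ (p - 1) * (1 + l)⁻¹) := fun l hl z hz => by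
    rw [mul_left_comm, norm_mul, norm_real, Real.norm_of_nonneg (Real.rpow_nonneg hl.le _)]
    have := norm_cayleyKernel_le_of_mem_spectrum hB hl.le hz
    gcongr
    exact Real.rpow_nonneg hl.le _
  have hint := integrableOn_rpow_sub_one_mul_inv_one_add hp
  refine (norm_cfc_setIntegral_mul_sub_le measurableSet_Ioi (hcont D) (hcont E) (hbound hD)
    (hbound hE) (hint.const_mul _) (hint.const_mul _)
    (((integrableOn_rpow_mul_inv_one_add_sq hp).const_mul 2).mul_const ‖D * a - a * E‖)
    fun l hl => norm_cfc_rpow_sub_one_mul_cayleyKernel_mul_sub_le p hD hE a hl).trans_eq ?_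
  rw [integral_mul_const, integral_const_mul, integral_rpow_mul_inv_one_add_sq hp]
  ring

lemma norm_cfc_cayleyPow_mul_sub_le (hp : p ∈ Ioo 0 1) (hD : IsSelfAdjoint D)
    (hE : IsSelfAdjoint E) (a : A) :
    ‖cfc (fun z : ℂ => cayleyPow p z.re) D * a - a * cfc (fun z : ℂ => cayleyPow p z.re) E‖ ≤
      2 * p * ‖D * a - a * E‖ := by
  have hcont : Continuous fun z : ℂ => cayleyPow p z.re :=
    (continuous_cayleyPow p).comp continuous_re
  have hpos := integral_rpow_sub_one_mul_inv_one_add_pos hp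
  have hmellin := norm_cfc_cayleyMellin_mul_sub_le hp hD hE a
  simp only [cayleyMellin_eq_mul_cayleyPow hp] at hmellin
  rw [norm_cfc_const_mul_mul_sub _ _ hcont.continuousOn hcont.continuousOn, norm_real,
    Real.norm_of_nonneg hpos.le] at hmellin
  exact le_of_mul_le_mul_left (hmellin.trans_eq (by ring)) hpos

lemma norm_cfc_cos_add_arctan_mul_sub_le (hp : p ∈ Ioo 0 1) (θ : ℝ) (hD : IsSelfAdjoint D)
    (hE : IsSelfAdjoint E) (a : A) :
    ‖cfc (fun x => Real.cos (θ + 2 * p * Real.arctan x)) D * a -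
        a * cfc (fun x => Real.cos (θ + 2 * p * Real.arctan x)) E‖ ≤
      2 * p * ‖D * a - a * E‖ := by
  have hre (x : ℝ) : Real.cos (θ + 2 * p * Real.arctan x) = (exp (θ * I) * cayleyPow p x).re := by
    rw [cayleyPow, ← Complex.exp_add, ← add_mul, ← ofReal_add, exp_ofReal_mul_I_re]
  have hphase {B C : A} (hB : IsSelfAdjoint B) (hC : IsSelfAdjoint C) (b : A) :
      ‖cfc (fun z : ℂ => exp (θ * I) * cayleyPow p z.re) B * b -
          b * cfc (fun z : ℂ => exp (θ * I) * cayleyPow p z.re) C‖ ≤ 2 * p * ‖B * b - b * C‖ := by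
    have hcont : Continuous fun z : ℂ => cayleyPow p z.re :=
      (continuous_cayleyPow p).comp continuous_re
    rw [norm_cfc_const_mul_mul_sub _ _ hcont.continuousOn hcont.continuousOn,
      norm_exp_ofReal_mul_I, one_mul]
    exact norm_cfc_cayleyPow_mul_sub_le hp hB hC b
  have hstar : ‖E * star a - star a * D‖ = ‖D * a - a * E‖ := by
    rw [← norm_star, norm_sub_rev]
    simp only [star_sub, star_mul, star_star, hD.star_eq, hE.star_eq]
  simp only [hre]
  exact norm_cfc_re_mul_sub_le (continuous_const.mul (continuous_cayleyPow p)) hD hE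
    (hphase hD hE a) (hstar ▸ hphase hE hD (star a))

end Estimates

section HalfAngle

lemma mul_one_add_sq_rpow_eq_sin_arctan (x : ℝ) :
    x * (1 + x ^ 2) ^ (-(1 : ℝ) / 2) = Real.sin (Real.arctan x) := by
  rw [Real.sin_arctan, neg_div, Real.rpow_neg (by positivity), ← Real.sqrt_eq_rpow, div_eq_mul_inv]

lemma sqrt_half_sub_eq_cos (x : ℝ) :
    √(1 / 2 - x * (1 + x ^ 2) ^ (-(1 : ℝ) / 2) / 2) = Real.cos (π / 4 + 1 / 2 * Real.arctan x) := by
  have hlower := Real.neg_pi_div_two_lt_arctan x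
  have hupper := Real.arctan_lt_pi_div_two x
  rw [mul_one_add_sq_rpow_eq_sin_arctan, show π / 4 + 1 / 2 * Real.arctan x =
    (Real.arctan x + π / 2) / 2 by ring, Real.cos_half (by linarith) (by linarith),
    Real.cos_add_pi_div_two]
  ring_nf

lemma sqrt_half_add_eq_cos (x : ℝ) :
    √(1 / 2 + x * (1 + x ^ 2) ^ (-(1 : ℝ) / 2) / 2) =
      Real.cos (-(π / 4) + 1 / 2 * Real.arctan x) := by
  have h := sqrt_half_sub_eq_cos (-x)
  rw [neg_sq, neg_mul, neg_div, sub_neg_eq_add, Real.arctan_neg, ← Real.cos_neg] at h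
  rw [h]
  ring_nf

end HalfAngle

theorem commutator_ct_st_general {A : Type*} [CStarAlgebra A] (D E a : A) (hD : IsSelfAdjoint D)
    (hE : IsSelfAdjoint E) (t : ℝ) (ht : 0 < t) :
    let c : ℝ → ℝ := fun x => √(1 / 2 - x * (1 + x ^ 2) ^ (-(1 : ℝ) / 2) / 2)
    let s : ℝ → ℝ := fun x => √(1 / 2 + x * (1 + x ^ 2) ^ (-(1 : ℝ) / 2) / 2)
    let ct : A → A := cfc fun x : ℝ => c (x / t)
    let st : A → A := cfc fun x : ℝ => s (x / t)
    ‖ct D * a - a * ct E‖ ≤ 1 / 2 * t⁻¹ * ‖D * a - a * E‖ ∧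
    ‖st D * a - a * st E‖ ≤ 1 / 2 * t⁻¹ * ‖D * a - a * E‖ := by
  intro c s ct st
  have hcos (θ : ℝ) : ‖cfc (fun x => Real.cos (θ + 1 / 2 * Real.arctan (x / t))) D * a -
      a * cfc (fun x => Real.cos (θ + 1 / 2 * Real.arctan (x / t))) E‖ ≤
        1 / 2 * t⁻¹ * ‖D * a - a * E‖ := by
    refine norm_cfc_div_mul_sub_le (f := fun x => Real.cos (θ + 1 / 2 * Real.arctan x))
      (by fun_prop) (fun hB hC => ?_) hD hE ht
    simpa only [show (2 * (1 / 4) : ℝ) = 1 / 2 by norm_num] using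
      norm_cfc_cos_add_arctan_mul_sub_le (p := 1 / 4) (by norm_num) θ hB hC a
  have hc : c = fun x => Real.cos (π / 4 + 1 / 2 * Real.arctan x) := funext sqrt_half_sub_eq_cos
  have hs : s = fun x => Real.cos (-(π / 4) + 1 / 2 * Real.arctan x) := funext sqrt_half_add_eq_cos
  simp only [ct, st, hc, hs]
  exact ⟨hcos _, hcos _⟩

/-- Let `D` be a self-adjoint element of a unital C*-algebra `A`, `a ∈ A`
and `t ≥ 1`.  With `c(x) := √(1/2 − x(1+x²)^{−1/2}/2)`, `s(x) := √(1/2 + x(1+x²)^{−1/2}/2)`,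
`c_t := c(·/t)(D)` and `s_t := s(·/t)(D)` given by the continuous functional calculus, one
has `‖[c_t, a]‖ ≤ (1/2) t⁻¹ ‖[D, a]‖` and `‖[s_t, a]‖ ≤ (1/2) t⁻¹ ‖[D, a]‖`. -/
theorem commutator_ct_st {A : Type*} [CStarAlgebra A] (D a : A) (hD : IsSelfAdjoint D)
    (t : ℝ) (ht : 1 ≤ t) :
    let c : ℝ → ℝ := fun x => Real.sqrt (1 / 2 - x * (1 + x ^ 2) ^ (-(1 : ℝ) / 2) / 2)
    let s : ℝ → ℝ := fun x => Real.sqrt (1 / 2 + x * (1 + x ^ 2) ^ (-(1 : ℝ) / 2) / 2)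
    let ct := cfc (fun x : ℝ => c (x / t)) D
    let st := cfc (fun x : ℝ => s (x / t)) D
    ‖ct * a - a * ct‖ ≤ 1 / 2 * t⁻¹ * ‖D * a - a * D‖ ∧
    ‖st * a - a * st‖ ≤ 1 / 2 * t⁻¹ * ‖D * a - a * D‖ :=
  commutator_ct_st_general D D a hD hD t (zero_lt_one.trans_le ht)
end

section
/- Let A be a unital C*-algebra, D ∈ A self-adjoint, a ∈ A, t ≥ 1, and 0 < σ ≤ 1. Then ‖cfc(fun x => (1 + x²/t²)^{−σ}) D · a − a · cfc(fun x => (1 + x²/t²)^{−σ}) D‖ ≤ 2·t⁻¹·‖D·a − a·D‖. As a consequence, with c(x) := √(1/2 − x·(1+x²)^{−1/2}/2), s(x) := √(1/2 + x·(1+x²)^{−1/2}/2), c_t := cfc(fun x => c(x/t)) D, s_t := cfc(fun x => s(x/t)) D, one has ‖√(c_t s_t)·a − a·√(c_t s_t)‖ ≤ 2·t⁻¹·‖D·a − a·D‖, where √(c_t s_t) is the positive square root of c_t s_t. -/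
/-!
For `R = (1 + D²)⁻¹` one has `[R, a] = -(RD [D, a] R + R [D, a] DR)`, where `‖R‖ ≤ 1` and
`‖RD‖ = ‖DR‖ ≤ 1/2`, so `‖[R, a]‖ ≤ ‖[D, a]‖`. By scaling, `‖[(1 + βD²)⁻¹, a]‖ ≤ √β ‖[D, a]‖`.
For `0 < σ ≤ 1` the function `(1 + y)^(-σ)` is an average of the functions `(1 + βy)⁻¹` over a
probability measure on `β ∈ [0, 1]`, so the bound passes to `(1 + D²)^(-σ)`, and replacing `D` by
`D / t` gives the factor `t⁻¹`. Finally `c s = (1 + y²)^(-1/2) / 2`, so uniqueness of positive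
square roots identifies `√(c_t s_t)` with `2^(-1/2) (1 + D²/t²)^(-1/4)`.
-/

open MeasureTheory Set

section Ring

variable {R : Type*} [Ring R]

lemma lie_eq_neg_mul_lie_mul {r q : R} (hrq : r * q = 1) (hqr : q * r = 1) (a : R) :
    ⁅r, a⁆ = -(r * ⁅q, a⁆ * r) := by
  calc ⁅r, a⁆ = r * a * (q * r) - r * q * a * r := by simp [Ring.lie_def, hrq, hqr]
    _ = -(r * ⁅q, a⁆ * r) := by rw [Ring.lie_def]; noncomm_ring

lemma one_add_sq_lie (x a : R) : ⁅1 + x ^ 2, a⁆ = x * ⁅x, a⁆ + ⁅x, a⁆ * x := by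
  simp only [Ring.lie_def]
  noncomm_ring

lemma smul_lie_eq_smul_lie {S : Type*} [Monoid S] [DistribMulAction S R] [IsScalarTower S R R]
    [SMulCommClass S R R] (s : S) (x a : R) :
    ⁅s • x, a⁆ = s • ⁅x, a⁆ := by
  simp only [Ring.lie_def, smul_mul_assoc, mul_smul_comm, smul_sub]

end Ring

lemma abs_mul_inv_one_add_sq_le (x : ℝ) : |x * (1 + x ^ 2)⁻¹| ≤ 1 / 2 := by
  rw [abs_mul, abs_of_pos (by positivity : 0 < (1 + x ^ 2)⁻¹), ← div_eq_mul_inv,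
    div_le_iff₀ (by positivity)]
  nlinarith [sq_nonneg (|x| - 1), sq_abs x]

lemma continuous_one_add_sq_rpow (p : ℝ) : Continuous fun x : ℝ => (1 + x ^ 2) ^ p :=
  Continuous.rpow_const (by fun_prop) fun x => Or.inl (by positivity)

lemma continuous_inv_one_add_sq : Continuous fun x : ℝ => (1 + x ^ 2)⁻¹ :=
  Continuous.inv₀ (by fun_prop) fun x => by positivity

lemma exists_isProbabilityMeasure_integral_eq_integral_mul_comp {X Y : Type*}
    [MeasurableSpace X] [MeasurableSpace Y] {μ : Measure X} {weight : X → ℝ}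
    (weight_int : Integrable weight μ) (weight_nonneg : 0 ≤ᵐ[μ] weight)
    (weight_mass : ∫ x, weight x ∂μ = 1) {φ : X → Y} (hφ : Measurable φ) :
    ∃ ν : Measure Y, IsProbabilityMeasure ν ∧
      ∀ {g : Y → ℝ}, Measurable g → ∫ y, g y ∂ν = ∫ x, weight x * g (φ x) ∂μ := by
  let ρ : Measure X := μ.withDensity fun x => ENNReal.ofReal (weight x)
  have ρ_prob : IsProbabilityMeasure ρ := ⟨by
    rw [withDensity_apply _ .univ, Measure.restrict_univ,
      ← ofReal_integral_eq_lintegral_ofReal weight_int weight_nonneg, weight_mass,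
      ENNReal.ofReal_one]⟩
  refine ⟨ρ.map φ, Measure.isProbabilityMeasure_map hφ.aemeasurable, fun {g} hg => ?_⟩
  calc ∫ y, g y ∂ρ.map φ = ∫ x, g (φ x) ∂ρ :=
        integral_map hφ.aemeasurable hg.aestronglyMeasurable
    _ = ∫ x, (ENNReal.ofReal (weight x)).toReal • g (φ x) ∂μ :=
        integral_withDensity_eq_integral_toReal_smul₀ weight_int.aemeasurable.ennreal_ofReal
          (.of_forall fun _ => ENNReal.ofReal_lt_top) _
    _ = ∫ x, weight x * g (φ x) ∂μ := by
        refine integral_congr_ae ?_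
        filter_upwards [weight_nonneg] with x hx
        rw [ENNReal.toReal_ofReal hx, smul_eq_mul]

lemma rpowIntegrand₀₁_inv_one_add {σ τ y : ℝ} (hσ : σ ∈ Ioo 0 1) (hτ : 0 < τ) (hy : 0 ≤ y) :
    Real.rpowIntegrand₀₁ σ τ (1 + y)⁻¹ =
      Real.rpowIntegrand₀₁ σ τ 1 * (1 + τ / (1 + τ) * y)⁻¹ := by
  rw [Real.rpowIntegrand₀₁_eq_pow_div hσ hτ.le (by positivity),
    Real.rpowIntegrand₀₁_eq_pow_div hσ hτ.le zero_le_one]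
  have : 0 < τ + 1 + τ * y := by positivity
  field_simp
  ring_nf

lemma exists_isProbabilityMeasure_rpow_neg_eq_integral {σ : ℝ} (hσ : 0 < σ) (hσ' : σ ≤ 1) :
    ∃ ν : Measure unitInterval, IsProbabilityMeasure ν ∧
      ∀ y : ℝ, 0 ≤ y → (1 + y) ^ (-σ) = ∫ β : unitInterval, (1 + β * y)⁻¹ ∂ν := by
  rcases hσ'.eq_or_lt with rfl | hlt
  · exact ⟨Measure.dirac 1, inferInstance, fun y _ => by simp [Real.rpow_neg_one]⟩
  have hσ01 : σ ∈ Ioo 0 1 := ⟨hσ, hlt⟩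
  obtain ⟨μ, hμ⟩ := Real.exists_measure_rpow_eq_integral_rpowIntegrand₀₁ hσ01
  obtain ⟨weight_int, weight_mass⟩ := hμ 1 (mem_Ici.2 zero_le_one)
  have toUnit_meas : Measurable fun τ : ℝ => projIcc (0 : ℝ) 1 zero_le_one (τ / (1 + τ)) :=
    continuous_projIcc.measurable.comp (by fun_prop)
  obtain ⟨ν, ν_prob, hν⟩ := exists_isProbabilityMeasure_integral_eq_integral_mul_comp weight_int
    (ae_restrict_of_forall_mem measurableSet_Ioi fun τ hτ =>
      Real.rpowIntegrand₀₁_nonneg hσ (le_of_lt hτ) zero_le_one)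
    (weight_mass.symm.trans (Real.one_rpow σ)) toUnit_meas
  refine ⟨ν, ν_prob, fun y hy => ?_⟩
  calc (1 + y) ^ (-σ) = ((1 + y)⁻¹) ^ σ := by
        rw [Real.rpow_neg (by positivity), Real.inv_rpow (by positivity)]
    _ = ∫ τ in Ioi 0, Real.rpowIntegrand₀₁ σ τ (1 + y)⁻¹ ∂μ :=
        (hμ _ (mem_Ici.2 (by positivity))).2
    _ = ∫ β : unitInterval, (1 + β * y)⁻¹ ∂ν := by
        rw [hν (by fun_prop : Measurable fun β : unitInterval => (1 + β * y)⁻¹)]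
        refine setIntegral_congr_fun measurableSet_Ioi fun τ (hτ : 0 < τ) => ?_
        have hmem : τ / (1 + τ) ∈ Icc (0 : ℝ) 1 :=
          ⟨by positivity, (div_le_one (by positivity)).2 (by linarith)⟩
        simp only [projIcc_of_mem zero_le_one hmem, rpowIntegrand₀₁_inv_one_add hσ01 hτ hy]

section CStarAlgebra

variable {A : Type*} [CStarAlgebra A] {D : A}

lemma norm_lie_cfc_inv_one_add_sq_le (hD : IsSelfAdjoint D) (a : A) :
    ‖⁅cfc (fun x : ℝ => (1 + x ^ 2)⁻¹) D, a⁆‖ ≤ ‖⁅D, a⁆‖ := by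
  set R := cfc (fun x : ℝ => (1 + x ^ 2)⁻¹) D with hR
  set P := cfc (fun x : ℝ => x * (1 + x ^ 2)⁻¹) D with hP
  have hDR : D * R = P := by
    rw [hP, cfc_mul _ _ D (by fun_prop) continuous_inv_one_add_sq.continuousOn, cfc_id' ℝ D]
  have hRD : R * D = P := (Commute.cfc_real rfl _).eq.trans hDR
  have hQ : cfc (fun x : ℝ => 1 + x ^ 2) D = 1 + D ^ 2 := by
    rw [cfc_const_add .., cfc_pow_id .., map_one]
  have hQR : (1 + D ^ 2) * R = 1 := by
    rw [← hQ, hR, ← cfc_mul _ _ D (by fun_prop) continuous_inv_one_add_sq.continuousOn,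
      ← cfc_one ℝ D]
    exact cfc_congr fun x _ => mul_inv_cancel₀ (by positivity)
  have hRQ : R * (1 + D ^ 2) = 1 := by
    rw [← hQ, hR, (cfc_commute_cfc _ _ D).eq, hQ, hQR]
  have hR_norm : ‖R‖ ≤ 1 := norm_cfc_le zero_le_one fun x _ => by
    rw [Real.norm_of_nonneg (by positivity)]
    exact inv_le_one_of_one_le₀ (by nlinarith)
  have hP_norm : ‖P‖ ≤ 1 / 2 :=
    norm_cfc_le (by norm_num) fun x _ => abs_mul_inv_one_add_sq_le x
  have hlie : ⁅R, a⁆ = -(P * ⁅D, a⁆ * R + R * ⁅D, a⁆ * P) := by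
    calc ⁅R, a⁆ = -(R * D * ⁅D, a⁆ * R + R * ⁅D, a⁆ * (D * R)) := by
          rw [lie_eq_neg_mul_lie_mul hRQ hQR, one_add_sq_lie]
          noncomm_ring
      _ = _ := by rw [hRD, hDR]
  calc ‖⁅R, a⁆‖ ≤ ‖P‖ * ‖⁅D, a⁆‖ * ‖R‖ + ‖R‖ * ‖⁅D, a⁆‖ * ‖P‖ := by
        rw [hlie, norm_neg]
        exact norm_add_le_of_le (norm_mul₃_le ..) (norm_mul₃_le ..)
    _ ≤ 1 / 2 * ‖⁅D, a⁆‖ * 1 + 1 * ‖⁅D, a⁆‖ * (1 / 2) := by gcongr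
    _ = ‖⁅D, a⁆‖ := by ring

lemma norm_lie_cfc_comp_mul_le (hD : IsSelfAdjoint D) (a : A) {f : ℝ → ℝ} (hf : Continuous f)
    (h : ∀ E : A, IsSelfAdjoint E → ‖⁅cfc f E, a⁆‖ ≤ ‖⁅E, a⁆‖) (s : ℝ) :
    ‖⁅cfc (fun x => f (s * x)) D, a⁆‖ ≤ |s| * ‖⁅D, a⁆‖ := by
  calc ‖⁅cfc (fun x => f (s * x)) D, a⁆‖ = ‖⁅cfc f (s • D), a⁆‖ := by
        rw [← cfc_comp_smul s f D hf.continuousOn]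
        simp only [smul_eq_mul]
    _ ≤ ‖⁅s • D, a⁆‖ := h _ (.smul (.all s) hD)
    _ = |s| * ‖⁅D, a⁆‖ := by rw [smul_lie_eq_smul_lie, norm_smul, Real.norm_eq_abs]

lemma norm_lie_cfc_inv_one_add_mul_sq_le (hD : IsSelfAdjoint D) (a : A) {β : ℝ} (hβ : 0 ≤ β) :
    ‖⁅cfc (fun x : ℝ => (1 + β * x ^ 2)⁻¹) D, a⁆‖ ≤ √β * ‖⁅D, a⁆‖ := by
  simpa only [mul_pow, Real.sq_sqrt hβ, abs_of_nonneg (Real.sqrt_nonneg β)] using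
    norm_lie_cfc_comp_mul_le hD a continuous_inv_one_add_sq
      (fun _ hE => norm_lie_cfc_inv_one_add_sq_le hE a) √β

lemma lie_cfc_integral {X : Type*} [TopologicalSpace X] [MeasurableSpace X]
    [OpensMeasurableSpace X] {μ : Measure X} (hD : IsSelfAdjoint D) (a : A)
    (f : X → ℝ → ℝ) (bound : X → ℝ)
    (hf : ContinuousOn (Function.uncurry f) (univ ×ˢ spectrum ℝ D))
    (bound_ge : ∀ᵐ x ∂μ, ∀ z ∈ spectrum ℝ D, ‖f x z‖ ≤ bound x)
    (bound_int : HasFiniteIntegral bound μ) :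
    ⁅cfc (fun z => ∫ x, f x z ∂μ) D, a⁆ = ∫ x, ⁅cfc (f x) D, a⁆ ∂μ := by
  have hint : Integrable (fun x => cfc (f x) D) μ :=
    integrable_cfc f bound D hf bound_ge bound_int
  simp only [Ring.lie_def]
  rw [cfc_integral f bound D hf bound_ge bound_int,
    integral_sub (hint.mul_const a) (hint.const_mul a),
    integral_mul_const_of_integrable hint, integral_const_mul_of_integrable hint]

lemma norm_lie_cfc_one_add_sq_rpow_neg_le (hD : IsSelfAdjoint D) (a : A) {σ : ℝ}
    (hσ : 0 < σ) (hσ' : σ ≤ 1) :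
    ‖⁅cfc (fun x : ℝ => (1 + x ^ 2) ^ (-σ)) D, a⁆‖ ≤ ‖⁅D, a⁆‖ := by
  obtain ⟨ν, _, hν⟩ := exists_isProbabilityMeasure_rpow_neg_eq_integral hσ hσ'
  let f : unitInterval → ℝ → ℝ := fun β x => (1 + β * x ^ 2)⁻¹
  have one_le (β : unitInterval) (x : ℝ) : 1 ≤ 1 + β * x ^ 2 :=
    le_add_of_nonneg_right (mul_nonneg β.2.1 (sq_nonneg x))
  have f_cont : Continuous (Function.uncurry f) :=
    Continuous.inv₀ (by fun_prop) fun p => (zero_lt_one.trans_le (one_le p.1 p.2)).ne'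
  have f_bound (β : unitInterval) (x : ℝ) : ‖f β x‖ ≤ 1 := by
    rw [norm_inv, Real.norm_of_nonneg (zero_le_one.trans (one_le β x))]
    exact inv_le_one_of_one_le₀ (one_le β x)
  have lie_bound (β : unitInterval) : ‖⁅cfc (f β) D, a⁆‖ ≤ ‖⁅D, a⁆‖ :=
    (norm_lie_cfc_inv_one_add_mul_sq_le hD a β.2.1).trans
      (mul_le_of_le_one_left (norm_nonneg _) (Real.sqrt_le_one.2 β.2.2))
  calc ‖⁅cfc (fun x : ℝ => (1 + x ^ 2) ^ (-σ)) D, a⁆‖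
      = ‖∫ β, ⁅cfc (f β) D, a⁆ ∂ν‖ := by
        rw [← lie_cfc_integral hD a f 1 f_cont.continuousOn
          (.of_forall fun β x _ => f_bound β x) (integrable_const 1).hasFiniteIntegral]
        simp only [hν _ (sq_nonneg _), f]
    _ ≤ ‖⁅D, a⁆‖ := by
        simpa using norm_integral_le_of_norm_le_const (μ := ν) (.of_forall lie_bound)

lemma norm_lie_cfc_one_add_div_sq_rpow_neg_le (hD : IsSelfAdjoint D) (a : A) {t σ : ℝ}
    (ht : 0 < t) (hσ : 0 < σ) (hσ' : σ ≤ 1) :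
    ‖⁅cfc (fun x : ℝ => (1 + (x / t) ^ 2) ^ (-σ)) D, a⁆‖ ≤ t⁻¹ * ‖⁅D, a⁆‖ := by
  simpa only [div_eq_inv_mul, abs_of_pos (inv_pos.2 ht)] using
    norm_lie_cfc_comp_mul_le hD a (continuous_one_add_sq_rpow (-σ))
      (fun _ hE => norm_lie_cfc_one_add_sq_rpow_neg_le hE a hσ hσ') t⁻¹

lemma eq_cfc_of_sq_eq_cfc_mul_cfc [PartialOrder A] [StarOrderedRing A] {r : A}
    {f g h : ℝ → ℝ} (hD : IsSelfAdjoint D) (hr : 0 ≤ r)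
    (hf : ContinuousOn f (spectrum ℝ D)) (hg : ContinuousOn g (spectrum ℝ D))
    (hh : ContinuousOn h (spectrum ℝ D)) (h_nonneg : ∀ x ∈ spectrum ℝ D, 0 ≤ h x)
    (hfg : ∀ x ∈ spectrum ℝ D, f x * g x = h x ^ 2) (hr_sq : r ^ 2 = cfc f D * cfc g D) :
    r = cfc h D := by
  rw [← CFC.sq_eq_sq_iff r _ hr (cfc_nonneg h_nonneg), hr_sq, ← cfc_mul f g D hf hg,
    ← cfc_pow h 2 D hh]
  exact cfc_congr hfg

end CStarAlgebra

lemma sqrt_half_sub_mul_sqrt_half_add {u : ℝ} (hu : u ^ 2 ≤ 1) :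
    √(1 / 2 - u / 2) * √(1 / 2 + u / 2) = √(1 - u ^ 2) / 2 := by
  have hu1 : u ≤ 1 := (abs_le.1 ((sq_le_one_iff_abs_le_one u).1 hu)).2
  calc √(1 / 2 - u / 2) * √(1 / 2 + u / 2) = √((1 - u ^ 2) / 2 ^ 2) := by
        rw [← Real.sqrt_mul (by linarith)]
        ring_nf
    _ = √(1 - u ^ 2) / 2 := by rw [Real.sqrt_div' _ (by positivity), Real.sqrt_sq two_pos.le]

lemma one_sub_sq_mul_one_add_sq_rpow (y : ℝ) :
    1 - (y * (1 + y ^ 2) ^ (-(1 : ℝ) / 2)) ^ 2 = (1 + y ^ 2)⁻¹ := by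
  have hsq : ((1 + y ^ 2) ^ (-(1 : ℝ) / 2)) ^ 2 = (1 + y ^ 2)⁻¹ := by
    rw [← Real.rpow_mul_natCast (by positivity), ← Real.rpow_neg_one]
    norm_num
  rw [mul_pow, hsq]
  field_simp
  ring

lemma sqrt_mul_sqrt_eq_sq_one_add_sq_rpow (y : ℝ) :
    √(1 / 2 - y * (1 + y ^ 2) ^ (-(1 : ℝ) / 2) / 2) *
      √(1 / 2 + y * (1 + y ^ 2) ^ (-(1 : ℝ) / 2) / 2) =
      (√(1 / 2) * (1 + y ^ 2) ^ (-(1 / 4) : ℝ)) ^ 2 := by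
  have hu := one_sub_sq_mul_one_add_sq_rpow y
  have hy : 0 < (1 + y ^ 2)⁻¹ := by positivity
  rw [sqrt_half_sub_mul_sqrt_half_add (by linarith), hu, mul_pow, Real.sq_sqrt (by norm_num),
    ← Real.rpow_mul_natCast (by positivity), Real.sqrt_eq_rpow, Real.inv_rpow (by positivity),
    ← Real.rpow_neg (by positivity)]
  norm_num
  ring

theorem commutator_sqrt_ctst_general {A : Type*} [CStarAlgebra A] [PartialOrder A]
    [StarOrderedRing A] (D a : A) (hD : IsSelfAdjoint D) (t : ℝ) (ht : 0 < t)
    (σ : ℝ) (hσ : 0 < σ) (hσ' : σ ≤ 1) :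
    let w := cfc (fun x : ℝ => (1 + x ^ 2 / t ^ 2) ^ (-σ)) D
    let c : ℝ → ℝ := fun x => Real.sqrt (1 / 2 - x * (1 + x ^ 2) ^ (-(1 : ℝ) / 2) / 2)
    let s : ℝ → ℝ := fun x => Real.sqrt (1 / 2 + x * (1 + x ^ 2) ^ (-(1 : ℝ) / 2) / 2)
    let ct := cfc (fun x : ℝ => c (x / t)) D
    let st := cfc (fun x : ℝ => s (x / t)) D
    ‖w * a - a * w‖ ≤ t⁻¹ * ‖D * a - a * D‖ ∧
    ∀ r : A, 0 ≤ r → r ^ 2 = ct * st →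
      ‖r * a - a * r‖ ≤ t⁻¹ * ‖D * a - a * D‖ := by
  intro w c s ct st
  have w_bound {p : ℝ} (hp : 0 < p) (hp' : p ≤ 1) :=
    norm_lie_cfc_one_add_div_sq_rpow_neg_le hD a ht hp hp'
  refine ⟨by simpa only [div_pow, Ring.lie_def] using w_bound hσ hσ', fun r hr hr_sq => ?_⟩
  have half_cont := continuous_one_add_sq_rpow (-(1 : ℝ) / 2)
  have quarter_cont := continuous_one_add_sq_rpow (-(1 / 4))
  have c_cont : Continuous c := by fun_prop
  have s_cont : Continuous s := by fun_prop
  have div_cont : Continuous fun x : ℝ => x / t := continuous_id.div_const t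
  let v : ℝ → ℝ := fun x => (1 + (x / t) ^ 2) ^ (-(1 / 4) : ℝ)
  have v_cont : Continuous v := quarter_cont.comp div_cont
  have r_eq : r = √(1 / 2) • cfc v D := by
    rw [← cfc_const_mul _ _ D v_cont.continuousOn]
    exact eq_cfc_of_sq_eq_cfc_mul_cfc hD hr (c_cont.comp div_cont).continuousOn
      (s_cont.comp div_cont).continuousOn (by fun_prop) (fun x _ => by positivity)
      (fun x _ => sqrt_mul_sqrt_eq_sq_one_add_sq_rpow (x / t)) hr_sq
  calc ‖⁅r, a⁆‖ = √(1 / 2) * ‖⁅cfc v D, a⁆‖ := by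
        rw [r_eq, smul_lie_eq_smul_lie, norm_smul, Real.norm_of_nonneg (Real.sqrt_nonneg _)]
    _ ≤ ‖⁅cfc v D, a⁆‖ :=
        mul_le_of_le_one_left (norm_nonneg _) (Real.sqrt_le_one.2 (by norm_num))
    _ ≤ t⁻¹ * ‖⁅D, a⁆‖ := w_bound (by norm_num) (by norm_num)

/-- Let `D` be a self-adjoint element of a unital C*-algebra `A`, `a ∈ A`,
`t ≥ 1` and `0 < σ ≤ 1`.  Then `‖[(1 + D²/t²)^{−σ}, a]‖ ≤ 2 t⁻¹ ‖[D, a]‖`.  As a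
consequence, with `c_t := c(·/t)(D)`, `s_t := s(·/t)(D)` as in the construction of the
quasi-projection representative, the positive square root `r` of `c_t s_t` (characterized by
`0 ≤ r` and `r² = c_t s_t`) satisfies `‖[r, a]‖ ≤ 2 t⁻¹ ‖[D, a]‖`. -/
theorem commutator_sqrt_ctst {A : Type*} [CStarAlgebra A] [PartialOrder A]
    [StarOrderedRing A] (D a : A) (hD : IsSelfAdjoint D) (t : ℝ) (ht : 1 ≤ t)
    (σ : ℝ) (hσ : 0 < σ) (hσ' : σ ≤ 1) :
    let w := cfc (fun x : ℝ => (1 + x ^ 2 / t ^ 2) ^ (-σ)) D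
    let c : ℝ → ℝ := fun x => Real.sqrt (1 / 2 - x * (1 + x ^ 2) ^ (-(1 : ℝ) / 2) / 2)
    let s : ℝ → ℝ := fun x => Real.sqrt (1 / 2 + x * (1 + x ^ 2) ^ (-(1 : ℝ) / 2) / 2)
    let ct := cfc (fun x : ℝ => c (x / t)) D
    let st := cfc (fun x : ℝ => s (x / t)) D
    ‖w * a - a * w‖ ≤ 2 * t⁻¹ * ‖D * a - a * D‖ ∧
    ∀ r : A, 0 ≤ r → r ^ 2 = ct * st →
      ‖r * a - a * r‖ ≤ 2 * t⁻¹ * ‖D * a - a * D‖ := by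
  have two_bound : t⁻¹ * ‖D * a - a * D‖ ≤ 2 * t⁻¹ * ‖D * a - a * D‖ := by
    rw [mul_assoc]
    exact le_mul_of_one_le_left (by positivity) one_le_two
  exact (commutator_sqrt_ctst_general D a hD t (by positivity) σ hσ hσ').imp (·.trans two_bound)
    fun h r hr hr_sq => (h r hr hr_sq).trans two_bound
end

section
/- Let A be a unital C*-algebra, D ∈ A self-adjoint, a ∈ A, t ≥ 1, and 0 ≤ σ < 1. Set F_t := cfc(fun x => (x/t)·(1 + x²/t²)^{−1/2}) D and |D|^σ := cfc(fun x => |x|^σ) D. Then ‖|D|^σ · (F_t·a − a·F_t)‖ ≤ C_σ · t^{σ−1} · ‖D·a − a·D‖, where C_σ := 1 + 2√π·Γ((1−σ)/2)/Γ((2−σ)/2) and Γ is the Gamma function. In particular, for σ = 0 one obtains ‖F_t·a − a·F_t‖ ≤ (1 + 2π)·t⁻¹·‖D·a − a·D‖. -/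
open Real

/-!
For `m > 0` put `R = (m + D²)⁻¹`. The commutator of `D R` with `a` is
`m R [D, a] R - D R [D, a] D R`, and in the functional calculus `‖|D|^σ R‖ ≤ m^(σ/2 - 1)` and
`‖|D|^σ D R‖ ≤ m^((σ - 1)/2)`; hence `‖|D|^σ [D R, a]‖ ≤ 2 m^(σ/2 - 1) ‖[D, a]‖`.
Since `F_t = π⁻¹ ∫ D (t² + v² + D²)⁻¹ dv`, integrating this bound over `m = t² + v²` reduces the
theorem to `∫ (c + v²)^(-s) dv = √π Γ(s - 1/2) / Γ(s) c^(1/2 - s)`. The latter also yields, for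
`s = 1`, the formula for `F_t`; it is proved by writing `Γ(s) (c + v²)^(-s)` as the integral of
`l^(s - 1) exp (-(c + v²) l)` over `l > 0` and performing the Gaussian integral in `v` first.
-/

open MeasureTheory Set

section IntegralAddSqRpow

variable {c s : ℝ}

lemma exp_neg_add_sq_mul (c l v : ℝ) :
    exp (-((c + v ^ 2) * l)) = exp (-(c * l)) * exp (-l * v ^ 2) := by
  rw [← exp_add]
  ring_nf

lemma integral_rpow_mul_exp_neg_add_sq_mul {l : ℝ} (hl : 0 < l) (c s : ℝ) :
    ∫ v : ℝ, l ^ (s - 1) * exp (-((c + v ^ 2) * l)) =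
      √π * (l ^ (s - 1 / 2 - 1) * exp (-(c * l))) := by
  have rpow_split : l ^ (s - 1) = l ^ (s - 1 / 2 - 1) * √l := by
    rw [sqrt_eq_rpow, ← rpow_add hl]
    ring_nf
  simp_rw [exp_neg_add_sq_mul, ← mul_assoc]
  rw [integral_const_mul, integral_gaussian, sqrt_div pi_pos.le, rpow_split]
  field_simp

lemma integrable_rpow_mul_exp_neg_add_sq_mul (hc : 0 < c) (hs : 1 / 2 < s) :
    Integrable (fun p : ℝ × ℝ => p.1 ^ (s - 1) * exp (-((c + p.2 ^ 2) * p.1)))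
      ((volume.restrict (Ioi 0)).prod volume) := by
  have measurable_integrand :
      Measurable fun p : ℝ × ℝ => p.1 ^ (s - 1) * exp (-((c + p.2 ^ 2) * p.1)) := by
    fun_prop
  refine (integrable_prod_iff measurable_integrand.aestronglyMeasurable).2 ⟨?_, ?_⟩
  · filter_upwards [ae_restrict_mem measurableSet_Ioi] with l hl
    simp_rw [exp_neg_add_sq_mul, ← mul_assoc]
    exact (integrable_exp_neg_mul_sq hl).const_mul _
  · have gamma_integrable :
        IntegrableOn (fun l : ℝ => l ^ (s - 1 / 2 - 1) * exp (-c * l ^ (1 : ℝ))) (Ioi 0) :=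
      integrableOn_rpow_mul_exp_neg_mul_rpow (by linarith) one_pos hc
    refine (gamma_integrable.const_mul √π).congr ?_
    filter_upwards [ae_restrict_mem measurableSet_Ioi] with l hl
    have hl_nonneg : 0 ≤ l := le_of_lt hl
    simp_rw [norm_of_nonneg (mul_nonneg (rpow_nonneg hl_nonneg (s - 1)) (exp_nonneg _))]
    rw [integral_rpow_mul_exp_neg_add_sq_mul hl, rpow_one, neg_mul]

lemma setIntegral_Ioi_rpow_mul_exp_neg_add_sq_mul (hc : 0 < c) (hs : 0 < s) (v : ℝ) :
    ∫ l in Ioi 0, l ^ (s - 1) * exp (-((c + v ^ 2) * l)) = Gamma s * (c + v ^ 2) ^ (-s) := by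
  have hcv : 0 < c + v ^ 2 := by positivity
  rw [integral_rpow_mul_exp_neg_mul_Ioi hs hcv, one_div, inv_rpow hcv.le, rpow_neg hcv.le, mul_comm]

lemma integrable_add_sq_rpow_neg (hc : 0 < c) (hs : 1 / 2 < s) :
    Integrable fun v : ℝ => (c + v ^ 2) ^ (-s) := by
  have hs_pos : 0 < s := by linarith
  refine ((integrable_rpow_mul_exp_neg_add_sq_mul hc hs).integral_prod_right.const_mul
    (Gamma s)⁻¹).congr (.of_forall fun v => ?_)
  simp only [setIntegral_Ioi_rpow_mul_exp_neg_add_sq_mul hc hs_pos]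
  exact inv_mul_cancel_left₀ (Gamma_pos_of_pos hs_pos).ne' _

lemma integral_add_sq_rpow_neg (hc : 0 < c) (hs : 1 / 2 < s) :
    ∫ v : ℝ, (c + v ^ 2) ^ (-s) = √π * Gamma (s - 1 / 2) / Gamma s * c ^ (1 / 2 - s) := by
  have hs_pos : 0 < s := by linarith
  have fubini : Gamma s * ∫ v : ℝ, (c + v ^ 2) ^ (-s) =
      √π * (Gamma (s - 1 / 2) * c ^ (1 / 2 - s)) := calc
    _ = ∫ v : ℝ, ∫ l in Ioi 0, l ^ (s - 1) * exp (-((c + v ^ 2) * l)) := by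
      simp_rw [setIntegral_Ioi_rpow_mul_exp_neg_add_sq_mul hc hs_pos, integral_const_mul]
    _ = ∫ l in Ioi 0, ∫ v : ℝ, l ^ (s - 1) * exp (-((c + v ^ 2) * l)) :=
      (integral_integral_swap (integrable_rpow_mul_exp_neg_add_sq_mul hc hs)).symm
    _ = ∫ l in Ioi 0, √π * (l ^ (s - 1 / 2 - 1) * exp (-(c * l))) :=
      setIntegral_congr_fun measurableSet_Ioi
        fun l hl => integral_rpow_mul_exp_neg_add_sq_mul hl c s
    _ = √π * (Gamma (s - 1 / 2) * c ^ (1 / 2 - s)) := by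
      rw [integral_const_mul, integral_rpow_mul_exp_neg_mul_Ioi (by linarith) hc, one_div c,
        inv_rpow hc.le, ← rpow_neg hc.le, neg_sub, mul_comm (Gamma _)]
  have hGamma : Gamma s ≠ 0 := (Gamma_pos_of_pos hs_pos).ne'
  rw [div_mul_eq_mul_div, eq_div_iff hGamma, mul_comm, fubini, mul_assoc]

lemma integrable_inv_add_sq (hc : 0 < c) : Integrable fun v : ℝ => (c + v ^ 2)⁻¹ := by
  simpa only [rpow_neg_one] using integrable_add_sq_rpow_neg (s := 1) hc (by norm_num)

lemma integral_inv_add_sq (hc : 0 < c) :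
    ∫ v : ℝ, (c + v ^ 2)⁻¹ = π * c ^ (-(1 : ℝ) / 2) := by
  have h := integral_add_sq_rpow_neg (s := 1) hc (by norm_num)
  rw [show (1 : ℝ) - 1 / 2 = 1 / 2 by norm_num, show (1 / 2 : ℝ) - 1 = -1 / 2 by norm_num,
    Gamma_one_half_eq, Gamma_one, div_one, mul_self_sqrt pi_pos.le] at h
  simpa only [rpow_neg_one] using h

end IntegralAddSqRpow

lemma div_mul_one_add_sq_rpow_eq_integral {t : ℝ} (ht : 0 < t) (x : ℝ) :
    x / t * (1 + x ^ 2 / t ^ 2) ^ (-(1 : ℝ) / 2) =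
      π⁻¹ * ∫ v : ℝ, x * (t ^ 2 + v ^ 2 + x ^ 2)⁻¹ := by
  have rescale : (t ^ 2 + x ^ 2) ^ (-(1 : ℝ) / 2) =
      t⁻¹ * (1 + x ^ 2 / t ^ 2) ^ (-(1 : ℝ) / 2) := by
    rw [show t ^ 2 + x ^ 2 = t ^ 2 * (1 + x ^ 2 / t ^ 2) by field_simp,
      mul_rpow (by positivity) (by positivity), ← rpow_natCast_mul ht.le,
      show ((2 : ℕ) : ℝ) * (-1 / 2) = -1 by norm_num, rpow_neg_one]
  simp_rw [add_right_comm (t ^ 2) _ (x ^ 2)]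
  rw [integral_const_mul, integral_inv_add_sq (by positivity), rescale]
  field_simp

lemma abs_rpow_mul_inv_add_sq_le {m r : ℝ} (hm : 0 < m) (hr : 0 ≤ r) (hr' : r ≤ 2) (x : ℝ) :
    |x| ^ r * (m + x ^ 2)⁻¹ ≤ m ^ (r / 2 - 1) := by
  have hpos : 0 < m + x ^ 2 := by positivity
  have abs_rpow_eq : |x| ^ r = (x ^ 2) ^ (r / 2) := by
    rw [← sq_abs, ← rpow_natCast_mul (abs_nonneg x)]
    push_cast
    ring_nf
  calc |x| ^ r * (m + x ^ 2)⁻¹ ≤ (m + x ^ 2) ^ (r / 2) * (m + x ^ 2)⁻¹ := by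
        rw [abs_rpow_eq]
        gcongr
        exact le_add_of_nonneg_left hm.le
    _ = (m + x ^ 2) ^ (r / 2 - 1) := by rw [← div_eq_mul_inv, rpow_sub_one hpos.ne']
    _ ≤ m ^ (r / 2 - 1) :=
        rpow_le_rpow_of_nonpos hm (le_add_of_nonneg_right (sq_nonneg x)) (by linarith)

lemma lie_mul_inv_algebraMap_add_sq {k A : Type*} [CommSemiring k] [Ring A] [Algebra k A]
    {m : k} {D R : A} (hleft : R * (algebraMap k A m + D ^ 2) = 1)
    (hright : (algebraMap k A m + D ^ 2) * R = 1) (a : A) :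
    ⁅D * R, a⁆ = m • (R * ⁅D, a⁆ * R) - D * R * ⁅D, a⁆ * (D * R) := by
  set X := algebraMap k A m + D ^ 2 with hX
  have commute_X : X * D = D * X := by
    rw [hX, add_mul, mul_add, Algebra.commutes, ← pow_succ, ← pow_succ']
  have commute_R : D * R = R * D := calc
    D * R = R * (X * D) * R := by rw [← mul_assoc R, hleft, one_mul]
    _ = R * D * (X * R) := by rw [commute_X]; noncomm_ring
    _ = R * D := by rw [hright, mul_one]
  have clear_denominators :
      m • ⁅D, a⁆ - D * ⁅D, a⁆ * D = D * a * X - X * (a * D) := by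
    rw [hX, mul_add, ← Algebra.commutes, Ring.lie_def, Algebra.smul_def]
    noncomm_ring
  symm
  calc m • (R * ⁅D, a⁆ * R) - D * R * ⁅D, a⁆ * (D * R)
      = R * (m • ⁅D, a⁆ - D * ⁅D, a⁆ * D) * R := by
        nth_rewrite 1 [commute_R]
        simp only [mul_sub, sub_mul, mul_smul_comm, smul_mul_assoc, mul_assoc]
    _ = R * D * a * (X * R) - R * X * a * (D * R) := by
        rw [clear_denominators]
        noncomm_ring
    _ = ⁅D * R, a⁆ := by
        rw [hleft, hright, mul_one, one_mul, ← commute_R, Ring.lie_def]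

lemma norm_mul_lie_integral_le {X A : Type*} [MeasurableSpace X] {μ : Measure X}
    [NormedRing A] [NormedAlgebra ℝ A] {G : X → A} {g : X → ℝ}
    (hG : Integrable G μ) (hg : Integrable g μ) (b a : A)
    (hbound : ∀ᵐ x ∂μ, ‖b * ⁅G x, a⁆‖ ≤ g x) :
    ‖b * ⁅∫ x, G x ∂μ, a⁆‖ ≤ ∫ x, g x ∂μ := by
  have integrable_lie : Integrable (fun x => G x * a - a * G x) μ :=
    (hG.mul_const a).sub (hG.const_mul a)
  have lie_integral : b * ⁅∫ x, G x ∂μ, a⁆ = ∫ x, b * ⁅G x, a⁆ ∂μ := by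
    simp only [Ring.lie_def]
    rw [integral_const_mul_of_integrable integrable_lie, integral_sub (hG.mul_const a)
      (hG.const_mul a), integral_const_mul_of_integrable hG, integral_mul_const_of_integrable hG]
  rw [lie_integral]
  exact norm_integral_le_of_norm_le hg hbound

section FunctionalCalculus

variable {A : Type*} [CStarAlgebra A] {D : A} {m σ t : ℝ}

lemma continuous_inv_add_sq (hm : 0 < m) : Continuous fun x : ℝ => (m + x ^ 2)⁻¹ :=
  (by fun_prop : Continuous fun x : ℝ => m + x ^ 2).inv₀ fun x => by positivity

lemma continuous_abs_rpow (hσ : 0 ≤ σ) : Continuous fun x : ℝ => |x| ^ σ :=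
  continuous_abs.rpow_const fun _ => .inr hσ

lemma norm_cfc_abs_rpow_mul_cfc_inv_add_sq_le (D : A) (hm : 0 < m) (hσ : 0 ≤ σ) (hσ' : σ ≤ 2) :
    ‖cfc (fun x : ℝ => |x| ^ σ) D * cfc (fun x : ℝ => (m + x ^ 2)⁻¹) D‖ ≤ m ^ (σ / 2 - 1) := by
  rw [← cfc_mul _ _ D (continuous_abs_rpow hσ).continuousOn (continuous_inv_add_sq hm).continuousOn]
  refine norm_cfc_le (by positivity) fun x _ => ?_
  rw [norm_of_nonneg (by positivity)]
  exact abs_rpow_mul_inv_add_sq_le hm hσ hσ' x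

lemma norm_cfc_abs_rpow_mul_cfc_mul_inv_add_sq_le (D : A) (hm : 0 < m) (hσ : 0 ≤ σ) (hσ' : σ ≤ 1) :
    ‖cfc (fun x : ℝ => |x| ^ σ) D * cfc (fun x : ℝ => x * (m + x ^ 2)⁻¹) D‖ ≤
      m ^ ((σ - 1) / 2) := by
  rw [← cfc_mul _ (fun x => x * (m + x ^ 2)⁻¹) D (continuous_abs_rpow hσ).continuousOn
    (continuous_id.mul (continuous_inv_add_sq hm)).continuousOn]
  refine norm_cfc_le (by positivity) fun x _ => ?_
  calc ‖|x| ^ σ * (x * (m + x ^ 2)⁻¹)‖ = |x| ^ (σ + 1) * (m + x ^ 2)⁻¹ := by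
        rw [rpow_add_one' (abs_nonneg x) (by linarith), norm_eq_abs, abs_mul, abs_mul,
          abs_of_nonneg (by positivity : 0 ≤ |x| ^ σ),
          abs_of_pos (by positivity : 0 < (m + x ^ 2)⁻¹), mul_assoc]
    _ ≤ m ^ ((σ + 1) / 2 - 1) :=
        abs_rpow_mul_inv_add_sq_le hm (by linarith) (by linarith) x
    _ = m ^ ((σ - 1) / 2) := by ring_nf

lemma cfc_abs_rpow_zero (hD : IsSelfAdjoint D) : cfc (fun x : ℝ => |x| ^ (0 : ℝ)) D = 1 := by
  simpa only [rpow_zero] using cfc_const_one ℝ D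

lemma lie_cfc_mul_inv_add_sq (hD : IsSelfAdjoint D) (hm : 0 < m) (a : A) :
    ⁅cfc (fun x : ℝ => x * (m + x ^ 2)⁻¹) D, a⁆ =
      m • (cfc (fun x : ℝ => (m + x ^ 2)⁻¹) D * ⁅D, a⁆ * cfc (fun x : ℝ => (m + x ^ 2)⁻¹) D) -
        cfc (fun x : ℝ => x * (m + x ^ 2)⁻¹) D * ⁅D, a⁆ *
          cfc (fun x : ℝ => x * (m + x ^ 2)⁻¹) D := by
  have hR := (continuous_inv_add_sq hm).continuousOn (s := spectrum ℝ D)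
  have hne (x : ℝ) : m + x ^ 2 ≠ 0 := by positivity
  have cfc_add_sq : cfc (fun x : ℝ => m + x ^ 2) D = algebraMap ℝ A m + D ^ 2 := by
    rw [cfc_const_add m (fun x : ℝ => x ^ 2) D, cfc_pow_id (R := ℝ) D 2]
  have resolvent_mul : cfc (fun x : ℝ => (m + x ^ 2)⁻¹) D * (algebraMap ℝ A m + D ^ 2) = 1 := by
    rw [← cfc_add_sq, ← cfc_mul _ _ D hR (by fun_prop), ← cfc_one ℝ D]
    exact cfc_congr fun x _ => inv_mul_cancel₀ (hne x)
  have mul_resolvent : (algebraMap ℝ A m + D ^ 2) * cfc (fun x : ℝ => (m + x ^ 2)⁻¹) D = 1 := by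
    rw [← cfc_add_sq, ← cfc_mul _ _ D (by fun_prop) hR, ← cfc_one ℝ D]
    exact cfc_congr fun x _ => mul_inv_cancel₀ (hne x)
  rw [cfc_mul _ _ D (by fun_prop) hR, cfc_id' ℝ D]
  exact lie_mul_inv_algebraMap_add_sq resolvent_mul mul_resolvent a

lemma norm_cfc_abs_rpow_mul_lie_cfc_mul_inv_add_sq_le (hD : IsSelfAdjoint D) (a : A)
    (hσ : 0 ≤ σ) (hσ' : σ ≤ 1) (hm : 0 < m) :
    ‖cfc (fun x : ℝ => |x| ^ σ) D * ⁅cfc (fun x : ℝ => x * (m + x ^ 2)⁻¹) D, a⁆‖ ≤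
      2 * m ^ (σ / 2 - 1) * ‖⁅D, a⁆‖ := by
  have norm_R := norm_cfc_abs_rpow_mul_cfc_inv_add_sq_le D hm le_rfl zero_le_two
  have norm_G := norm_cfc_abs_rpow_mul_cfc_mul_inv_add_sq_le D hm le_rfl zero_le_one
  rw [cfc_abs_rpow_zero hD, one_mul] at norm_R norm_G
  have norm_BR := norm_cfc_abs_rpow_mul_cfc_inv_add_sq_le D hm hσ (by linarith)
  have norm_BG := norm_cfc_abs_rpow_mul_cfc_mul_inv_add_sq_le D hm hσ hσ'
  rw [lie_cfc_mul_inv_add_sq hD hm]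
  set B := cfc (fun x : ℝ => |x| ^ σ) D
  set R := cfc (fun x : ℝ => (m + x ^ 2)⁻¹) D
  set G := cfc (fun x : ℝ => x * (m + x ^ 2)⁻¹) D
  calc ‖B * (m • (R * ⁅D, a⁆ * R) - G * ⁅D, a⁆ * G)‖
      = ‖m • (B * R * ⁅D, a⁆ * R) - B * G * ⁅D, a⁆ * G‖ := by
        simp only [mul_sub, mul_smul_comm, mul_assoc]
    _ ≤ m * (‖B * R‖ * ‖⁅D, a⁆‖ * ‖R‖) + ‖B * G‖ * ‖⁅D, a⁆‖ * ‖G‖ := by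
        refine (norm_sub_le _ _).trans (add_le_add ?_ (norm_mul₃_le ..))
        rw [norm_smul, norm_of_nonneg hm.le]
        gcongr
        exact norm_mul₃_le ..
    _ ≤ m * (m ^ (σ / 2 - 1) * ‖⁅D, a⁆‖ * m ^ ((0 : ℝ) / 2 - 1)) +
          m ^ ((σ - 1) / 2) * ‖⁅D, a⁆‖ * m ^ (((0 : ℝ) - 1) / 2) := by
        gcongr
    _ = 2 * m ^ (σ / 2 - 1) * ‖⁅D, a⁆‖ := by
        have first_power : m * m ^ ((0 : ℝ) / 2 - 1) = 1 := by
          rw [zero_div, zero_sub, rpow_neg_one, mul_inv_cancel₀ hm.ne']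
        have second_power :
            m ^ ((σ - 1) / 2) * m ^ (((0 : ℝ) - 1) / 2) = m ^ (σ / 2 - 1) := by
          rw [← rpow_add hm]
          ring_nf
        linear_combination m ^ (σ / 2 - 1) * ‖⁅D, a⁆‖ * first_power + ‖⁅D, a⁆‖ * second_power

lemma continuous_uncurry_mul_inv_sq_add_sq_add_sq (ht : 0 < t) :
    Continuous (Function.uncurry fun v x : ℝ => x * (t ^ 2 + v ^ 2 + x ^ 2)⁻¹) := by
  have hne (p : ℝ × ℝ) : t ^ 2 + p.1 ^ 2 + p.2 ^ 2 ≠ 0 := by positivity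
  simp only [Function.uncurry_def]
  fun_prop (disch := assumption)

lemma exists_forall_norm_mul_inv_sq_add_sq_add_sq_le (D : A) (ht : 0 < t) :
    ∃ M : ℝ, ∀ v : ℝ, ∀ x ∈ spectrum ℝ D,
      ‖x * (t ^ 2 + v ^ 2 + x ^ 2)⁻¹‖ ≤ M * (t ^ 2 + v ^ 2)⁻¹ := by
  obtain ⟨M, hM⟩ := (spectrum.isCompact (𝕜 := ℝ) D).isBounded.exists_norm_le
  refine ⟨M, fun v x hx => ?_⟩
  have hM_nonneg : 0 ≤ M := (norm_nonneg x).trans (hM x hx)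
  rw [norm_mul, norm_of_nonneg (by positivity : 0 ≤ (t ^ 2 + v ^ 2 + x ^ 2)⁻¹)]
  exact mul_le_mul (hM x hx)
    (inv_anti₀ (by positivity) (le_add_of_nonneg_right (sq_nonneg x))) (by positivity) hM_nonneg

lemma integrable_cfc_mul_inv_sq_add_sq_add_sq (hD : IsSelfAdjoint D) (ht : 0 < t) :
    Integrable fun v : ℝ => cfc (fun x : ℝ => x * (t ^ 2 + v ^ 2 + x ^ 2)⁻¹) D := by
  obtain ⟨M, hM⟩ := exists_forall_norm_mul_inv_sq_add_sq_add_sq_le D ht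
  exact integrable_cfc _ (fun v => M * (t ^ 2 + v ^ 2)⁻¹) D
    (continuous_uncurry_mul_inv_sq_add_sq_add_sq ht).continuousOn (.of_forall hM)
    ((integrable_inv_add_sq (by positivity)).const_mul M).2

lemma cfc_div_mul_one_add_sq_rpow_eq_integral (hD : IsSelfAdjoint D) (ht : 0 < t) :
    cfc (fun x : ℝ => x / t * (1 + x ^ 2 / t ^ 2) ^ (-(1 : ℝ) / 2)) D =
      π⁻¹ • ∫ v : ℝ, cfc (fun x : ℝ => x * (t ^ 2 + v ^ 2 + x ^ 2)⁻¹) D := by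
  obtain ⟨M, hM⟩ := exists_forall_norm_mul_inv_sq_add_sq_add_sq_le D ht
  have continuous_transform :
      Continuous fun x : ℝ => x / t * (1 + x ^ 2 / t ^ 2) ^ (-(1 : ℝ) / 2) :=
    (continuous_id.div_const t).mul
      (Continuous.rpow_const (by fun_prop) fun x => .inl (by positivity))
  have integral_eq : (fun x : ℝ => ∫ v : ℝ, x * (t ^ 2 + v ^ 2 + x ^ 2)⁻¹) =
      fun x => π • (x / t * (1 + x ^ 2 / t ^ 2) ^ (-(1 : ℝ) / 2)) := by
    funext x
    rw [div_mul_one_add_sq_rpow_eq_integral ht, smul_eq_mul, mul_inv_cancel_left₀ pi_ne_zero]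
  rw [← cfc_integral _ (fun v => M * (t ^ 2 + v ^ 2)⁻¹) D
    (continuous_uncurry_mul_inv_sq_add_sq_add_sq ht).continuousOn (.of_forall hM)
    ((integrable_inv_add_sq (by positivity)).const_mul M).2, integral_eq,
    cfc_smul _ _ D continuous_transform.continuousOn, inv_smul_smul₀ pi_ne_zero]

end FunctionalCalculus

lemma inv_pi_mul_integral_two_mul_sq_add_sq_rpow {t σ : ℝ} (ht : 0 < t) (hσ : σ < 1) :
    π⁻¹ * ∫ v : ℝ, 2 * (t ^ 2 + v ^ 2) ^ (σ / 2 - 1) =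
      2 / √π * Gamma ((1 - σ) / 2) / Gamma ((2 - σ) / 2) * t ^ (σ - 1) := by
  have h := integral_add_sq_rpow_neg (c := t ^ 2) (s := (2 - σ) / 2) (by positivity) (by linarith)
  rw [show -((2 - σ) / 2) = σ / 2 - 1 by ring, show (2 - σ) / 2 - 1 / 2 = (1 - σ) / 2 by ring,
    ← rpow_natCast_mul ht.le,
    show ((2 : ℕ) : ℝ) * (1 / 2 - (2 - σ) / 2) = σ - 1 by push_cast; ring] at h
  have inv_pi_mul_sqrt : π⁻¹ * √π = 1 / √π := by
    rw [inv_mul_eq_div, sqrt_div_self']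
  rw [integral_const_mul, h]
  linear_combination
    2 * Gamma ((1 - σ) / 2) / Gamma ((2 - σ) / 2) * t ^ (σ - 1) * inv_pi_mul_sqrt

lemma norm_cfc_abs_rpow_mul_lie_cfc_div_mul_one_add_sq_rpow_le {A : Type*} [CStarAlgebra A]
    {D : A} (hD : IsSelfAdjoint D) (a : A) {t σ : ℝ} (ht : 0 < t) (hσ : 0 ≤ σ) (hσ' : σ < 1) :
    ‖cfc (fun x : ℝ => |x| ^ σ) D *
        ⁅cfc (fun x : ℝ => x / t * (1 + x ^ 2 / t ^ 2) ^ (-(1 : ℝ) / 2)) D, a⁆‖ ≤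
      2 / √π * Gamma ((1 - σ) / 2) / Gamma ((2 - σ) / 2) * t ^ (σ - 1) * ‖⁅D, a⁆‖ := by
  have integrable_bound : Integrable fun v : ℝ => 2 * (t ^ 2 + v ^ 2) ^ (σ / 2 - 1) := by
    have h := integrable_add_sq_rpow_neg (c := t ^ 2) (s := 1 - σ / 2) (by positivity) (by linarith)
    rw [neg_sub] at h
    exact h.const_mul 2
  have integrated_bound := norm_mul_lie_integral_le
    (integrable_cfc_mul_inv_sq_add_sq_add_sq hD ht) (integrable_bound.mul_const ‖⁅D, a⁆‖)
    (cfc (fun x : ℝ => |x| ^ σ) D) a (.of_forall fun v =>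
      norm_cfc_abs_rpow_mul_lie_cfc_mul_inv_add_sq_le hD a hσ hσ'.le (by positivity))
  have inv_pi_smul_lie (b : A) : ⁅π⁻¹ • b, a⁆ = π⁻¹ • ⁅b, a⁆ := by
    simp only [Ring.lie_def, smul_mul_assoc, mul_smul_comm, smul_sub]
  rw [cfc_div_mul_one_add_sq_rpow_eq_integral hD ht, inv_pi_smul_lie, mul_smul_comm, norm_smul,
    norm_of_nonneg (by positivity), ← inv_pi_mul_integral_two_mul_sq_add_sq_rpow ht hσ', mul_assoc,
    ← integral_mul_const]
  gcongr

lemma two_div_sqrt_pi_mul_Gamma_div_Gamma_le {σ : ℝ} (hσ : σ < 1) :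
    2 / √π * Gamma ((1 - σ) / 2) / Gamma ((2 - σ) / 2) ≤
      1 + 2 * √π * Gamma ((1 - σ) / 2) / Gamma ((2 - σ) / 2) := by
  have ratio_nonneg : 0 ≤ Gamma ((1 - σ) / 2) / Gamma ((2 - σ) / 2) :=
    div_nonneg (Gamma_nonneg_of_nonneg (by linarith)) (Gamma_nonneg_of_nonneg (by linarith))
  have one_le_sqrt_pi : 1 ≤ √π := one_le_sqrt.2 (by linarith [pi_gt_three])
  have coefficient_le : 2 / √π ≤ 2 * √π :=
    (div_le_self zero_le_two one_le_sqrt_pi).trans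
      (le_mul_of_one_le_right zero_le_two one_le_sqrt_pi)
  rw [mul_div_assoc, mul_div_assoc]
  exact le_add_of_nonneg_of_le zero_le_one (mul_le_mul_of_nonneg_right coefficient_le ratio_nonneg)

theorem commutator_Ds_Ft_general {A : Type*} [CStarAlgebra A] (D a : A) (hD : IsSelfAdjoint D)
    (t : ℝ) (ht : 0 < t) (σ : ℝ) (hσ : 0 ≤ σ) (hσ' : σ < 1) :
    let Ft := cfc (fun x : ℝ => x / t * (1 + x ^ 2 / t ^ 2) ^ (-(1 : ℝ) / 2)) D
    let absDσ := cfc (fun x : ℝ => |x| ^ σ) D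
    ‖absDσ * (Ft * a - a * Ft)‖ ≤
      2 / √π * Gamma ((1 - σ) / 2) / Gamma ((2 - σ) / 2) * t ^ (σ - 1) * ‖D * a - a * D‖ ∧
    ‖Ft * a - a * Ft‖ ≤ 2 * t⁻¹ * ‖D * a - a * D‖ := by
  refine ⟨norm_cfc_abs_rpow_mul_lie_cfc_div_mul_one_add_sq_rpow_le hD a ht hσ hσ', ?_⟩
  have h := norm_cfc_abs_rpow_mul_lie_cfc_div_mul_one_add_sq_rpow_le hD a ht le_rfl one_pos
  have constant_eq_two : 2 / √π * Gamma ((1 - 0) / 2) / Gamma ((2 - 0) / 2) = 2 := by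
    rw [sub_zero, sub_zero, Gamma_one_half_eq, div_self two_ne_zero, Gamma_one, div_one,
      div_mul_cancel₀ _ (by positivity)]
  rwa [cfc_abs_rpow_zero hD, one_mul, constant_eq_two, zero_sub, rpow_neg_one] at h

/-- Let `D` be a self-adjoint element of a unital C*-algebra `A`, `a ∈ A`,
`t ≥ 1` and `0 ≤ σ < 1`.  With `F_t := (·/t)(1 + ·²/t²)^{−1/2}(D)` and `|D|^σ := |·|^σ(D)`
given by the continuous functional calculus, one has
`‖|D|^σ [F_t, a]‖ ≤ C_σ t^{σ−1} ‖[D, a]‖` where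
`C_σ := 1 + 2√π Γ((1−σ)/2)/Γ((2−σ)/2)`; in particular (the case `σ = 0`)
`‖[F_t, a]‖ ≤ (1 + 2π) t⁻¹ ‖[D, a]‖`. -/
theorem commutator_Ds_Ft {A : Type*} [CStarAlgebra A] (D a : A) (hD : IsSelfAdjoint D)
    (t : ℝ) (ht : 1 ≤ t) (σ : ℝ) (hσ : 0 ≤ σ) (hσ' : σ < 1) :
    let Ft := cfc (fun x : ℝ => x / t * (1 + x ^ 2 / t ^ 2) ^ (-(1 : ℝ) / 2)) D
    let absDσ := cfc (fun x : ℝ => |x| ^ σ) D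
    ‖absDσ * (Ft * a - a * Ft)‖ ≤
      (1 + 2 * Real.sqrt π * Real.Gamma ((1 - σ) / 2) / Real.Gamma ((2 - σ) / 2)) *
        t ^ (σ - 1) * ‖D * a - a * D‖ ∧
    ‖Ft * a - a * Ft‖ ≤ (1 + 2 * π) * t⁻¹ * ‖D * a - a * D‖ := by
  obtain ⟨hσ_bound, hzero_bound⟩ := commutator_Ds_Ft_general D a hD t (by linarith) σ hσ hσ'
  exact ⟨hσ_bound.trans (by gcongr; exact two_div_sqrt_pi_mul_Gamma_div_Gamma_le hσ'),
    hzero_bound.trans (by gcongr; linarith [pi_gt_three])⟩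
end
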